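/- arXiv:2305.12553 — 8 statements merged into one kernel-verified Lean document; each statement's English description precedes it below -/
import Mathlib

section
/- (Proposition 1: Markov congestion games are Markov α-potential games.) Consider the Markov congestion game G_mcg described in the context. For each policy profile π, let Φ(·,π) : S → ℝ be the unique solution of Φ(s,π) = φ(s,π) + δ·∑_{s'∈S} P^π(s'|s)·Φ(s',π), where φ(s,π) = ∑_{a∈A} π(s,a)·φ(s,a) and φ(s,a) = ∑_{e∈E} ∑_{j=1}^{w_e(a)·n/D} c_e(s, j·D/n) is Rosenthal's potential of the stage game at state s. Suppose M ≥ 0 satisfies Φ(s,π) ≤ M for every state s and every profile π. Then for every state s, every player i, all policies π_i, π_i' of player i, and every π_{-i}: |(Φ(s,(π_i',π_{-i})) − Φ(s,(π_i,π_{-i}))) − (V_i(s,(π_i',π_{-i})) − V_i(s,(π_i,π_{-i})))| ≤ 2·ζ·|S|·D·δ·|E|·M / (n·(1−δ)); that is, G_mcg is a Markov α-potential game with α = 2ζ|S|Dδ|E|M/(n(1−δ)) and α-potential function Φ. -/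
open Finset

section MarkovGameDefs

variable {S : Type*} {I : Type*} {A : I → Type*}

/-- A probability vector on a finite set. -/
def IsProbVec {α : Type*} [Fintype α] (p : α → ℝ) : Prop :=
  (∀ a, 0 ≤ p a) ∧ ∑ a, p a = 1

/-- A stationary policy profile: each player's policy gives a probability vector at each state. -/
def IsPolicy [Fintype I] [∀ i, Fintype (A i)] (π : ∀ i, S → A i → ℝ) : Prop :=
  ∀ i s, IsProbVec (π i s)

/-- A transition kernel. -/
def IsKernel [Fintype S] (P : S → (∀ i, A i) → S → ℝ) : Prop :=
  ∀ s a, IsProbVec (fun s' => P s a s')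

/-- Product distribution on joint actions induced by a profile. -/
noncomputable def jointDist [Fintype I] (π : ∀ i, S → A i → ℝ) (s : S) (a : ∀ i, A i) : ℝ :=
  ∏ i, π i s (a i)

/-- Induced transition matrix `P^π`. -/
noncomputable def transMat [Fintype S] [Fintype I] [DecidableEq I] [∀ i, Fintype (A i)]
    (P : S → (∀ i, A i) → S → ℝ) (π : ∀ i, S → A i → ℝ) (s s' : S) : ℝ :=
  ∑ a : ∀ j, A j, jointDist π s a * P s a s'

/-- Expected one-stage payoff `u(s,π)`. -/
noncomputable def expPay [Fintype I] [DecidableEq I] [∀ i, Fintype (A i)]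
    (u : S → (∀ i, A i) → ℝ) (π : ∀ i, S → A i → ℝ) (s : S) : ℝ :=
  ∑ a : ∀ j, A j, jointDist π s a * u s a

/-- `V` solves the Bellman equation for payoff `u`, kernel `P`, discount `δ`, profile `π`. -/
def IsValueFun [Fintype S] [Fintype I] [DecidableEq I] [∀ i, Fintype (A i)]
    (δ : ℝ) (P : S → (∀ i, A i) → S → ℝ) (u : S → (∀ i, A i) → ℝ)
    (π : ∀ i, S → A i → ℝ) (V : S → ℝ) : Prop :=
  ∀ s, V s = expPay u π s + δ * ∑ s', transMat P π s s' * V s'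

/-- Player `i`'s Q-function, given a value function `V` for player `i` under `π`. -/
noncomputable def Qfun [Fintype S] [Fintype I] [DecidableEq I] [∀ i, Fintype (A i)]
    [∀ i, DecidableEq (A i)]
    (δ : ℝ) (P : S → (∀ i, A i) → S → ℝ) (u : S → (∀ i, A i) → ℝ)
    (π : ∀ i, S → A i → ℝ) (V : S → ℝ) (i : I) (s : S) (ai : A i) : ℝ :=
  ∑ a : ∀ j, A j,
    if a i = ai then
      (∏ j ∈ Finset.univ.erase i, π j s (a j)) * (u s a + δ * ∑ s', P s a s' * V s')
    else 0

/-- Discounted state visitation distribution `d_μ^π`. -/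
noncomputable def dvisit [Fintype S] [DecidableEq S] [Fintype I] [DecidableEq I]
    [∀ i, Fintype (A i)]
    (δ : ℝ) (P : S → (∀ i, A i) → S → ℝ) (π : ∀ i, S → A i → ℝ) (μ : S → ℝ) (s : S) : ℝ :=
  (1 - δ) * ∑' k : ℕ, δ ^ k * ∑ s0, μ s0 * ((Matrix.of (transMat P π)) ^ k) s0 s

/-- Negative entropy `ν(p) = ∑ p log p` (with the convention `0 log 0 = 0`,
which holds automatically since `Real.log 0 = 0`). -/
noncomputable def negent {α : Type*} [Fintype α] (p : α → ℝ) : ℝ :=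
  ∑ a, p a * Real.log (p a)

/-- `Ṽ` solves the Bellman equation of the `τ`-smoothed game for player `i`. -/
def IsSmoothedValueFun [Fintype S] [Fintype I] [DecidableEq I] [∀ i, Fintype (A i)]
    (δ τ : ℝ) (P : S → (∀ i, A i) → S → ℝ) (u : S → (∀ i, A i) → ℝ)
    (π : ∀ i, S → A i → ℝ) (i : I) (Vt : S → ℝ) : Prop :=
  ∀ s, Vt s = expPay u π s - τ * negent (π i s) + δ * ∑ s', transMat P π s s' * Vt s'

/-- Smoothed Q-function `Q̃_i(s,a_i;π)`. -/
noncomputable def Qsmooth [Fintype S] [Fintype I] [DecidableEq I] [∀ i, Fintype (A i)]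
    [∀ i, DecidableEq (A i)]
    (δ τ : ℝ) (P : S → (∀ i, A i) → S → ℝ) (u : S → (∀ i, A i) → ℝ)
    (π : ∀ i, S → A i → ℝ) (Vt : S → ℝ) (i : I) (s : S) (ai : A i) : ℝ :=
  ∑ a : ∀ j, A j,
    if a i = ai then
      (∏ j ∈ Finset.univ.erase i, π j s (a j)) *
        (u s a - τ * negent (π i s) + δ * ∑ s', P s a s' * Vt s')
    else 0

/-- Euclidean (ℓ²) norm on `α → ℝ`. -/
noncomputable def l2norm {α : Type*} [Fintype α] (f : α → ℝ) : ℝ :=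
  Real.sqrt (∑ a, f a ^ 2)

/-- Standard inner product on `α → ℝ`. -/
noncomputable def dotp {α : Type*} [Fintype α] (f g : α → ℝ) : ℝ :=
  ∑ a, f a * g a

/-- `y` is the Euclidean orthogonal projection of `x` onto the probability simplex. -/
noncomputable def IsProjSimplex {α : Type*} [Fintype α] (x y : α → ℝ) : Prop :=
  IsProbVec y ∧ ∀ z, IsProbVec z → l2norm (fun a => y a - x a) ≤ l2norm (fun a => z a - x a)

/-- Softmax (smoothed best response) with temperature `τ`. -/
noncomputable def softmax {α : Type*} [Fintype α] (τ : ℝ) (q : α → ℝ) (a : α) : ℝ :=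
  Real.exp (q a / τ) / ∑ a', Real.exp (q a' / τ)

end MarkovGameDefs

section CongestionDefs

variable {S E I : Type*} {A : I → Type*}

/-- Number of players using resource `e` under joint action `a`. -/
def nUsers [Fintype I] [DecidableEq E] (act : ∀ i, A i → Finset E)
    (a : ∀ i, A i) (e : E) : ℕ :=
  (Finset.univ.filter (fun i => e ∈ act i (a i))).card

/-- Aggregate usage `w_e(a) = (D/n) · |{i : e ∈ a_i}|`. -/
noncomputable def waggr [Fintype I] [DecidableEq E] (act : ∀ i, A i → Finset E)
    (D : ℝ) (a : ∀ i, A i) (e : E) : ℝ :=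
  D / (Fintype.card I) * (nUsers act a e)

/-- One-stage congestion payoff `u_i(s,a) = ∑_{e ∈ a_i} c_e(s, w_e(a))`. -/
noncomputable def congPay [Fintype I] [DecidableEq E] (act : ∀ i, A i → Finset E)
    (D : ℝ) (c : E → S → ℝ → ℝ) (i : I) (s : S) (a : ∀ i, A i) : ℝ :=
  ∑ e ∈ act i (a i), c e s (waggr act D a e)

/-- Rosenthal's potential of the stage game:
`φ(s,a) = ∑_{e∈E} ∑_{j=1}^{w_e(a)·n/D} c_e(s, j·D/n)`. -/
noncomputable def rosenthal [Fintype I] [Fintype E] [DecidableEq E]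
    (act : ∀ i, A i → Finset E) (D : ℝ) (c : E → S → ℝ → ℝ) (s : S) (a : ∀ i, A i) : ℝ :=
  ∑ e : E, ∑ j ∈ Finset.Icc 1 (nUsers act a e), c e s (j * D / (Fintype.card I))

end CongestionDefs

-- HELPERS
theorem aux_max {S : Type*} [Fintype S] [Nonempty S] (δ : ℝ) (hδ : 0 < δ) (hδ1 : δ < 1)
    (T : S → S → ℝ) (hT : ∀ s, IsProbVec (T s)) (h : S → ℝ) (B : ℝ)
    (hh : ∀ s, h s ≤ B + δ * ∑ s', T s s' * h s') (s : S) : h s ≤ B / (1 - δ) := by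
  obtain ⟨s0, hs0⟩ := Finite.exists_max h
  have h1 : ∑ s', T s0 s' * h s' ≤ h s0 := by
    calc ∑ s', T s0 s' * h s' ≤ ∑ s', T s0 s' * h s0 :=
          Finset.sum_le_sum fun s' _ => mul_le_mul_of_nonneg_left (hs0 s') ((hT s0).1 s')
      _ = h s0 := by rw [← Finset.sum_mul, (hT s0).2, one_mul]
  have h2 := hh s0
  have h3 : h s0 ≤ B / (1 - δ) := by
    rw [le_div_iff₀ (by linarith)]
    nlinarith
  exact (hs0 s).trans h3

theorem aux_sum_prod {I : Type*} [Fintype I] [DecidableEq I] {A : I → Type*}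
    [∀ i, Fintype (A i)] (p : ∀ i, A i → ℝ) (hp : ∀ i, IsProbVec (p i)) :
    ∑ a : ∀ j, A j, ∏ j, p j (a j) = 1 := by
  rw [← Fintype.prod_sum]
  exact Finset.prod_eq_one fun i _ => (hp i).2

theorem aux_swap {I : Type*} [Fintype I] [DecidableEq I] {A : I → Type*}
    [∀ i, Fintype (A i)] (p : ∀ i, A i → ℝ) (i : I) (q : A i → ℝ)
    (F : (∀ j, A j) → ℝ) :
    ∑ a : ∀ j, A j, ∑ x : A i, (∏ j, p j (a j)) * q x * F (Function.update a i x) =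
    ∑ a : ∀ j, A j, ∑ x : A i, (∏ j, Function.update p i q j (a j)) * p i x * F a := by
  rw [← Fintype.sum_prod_type', ← Fintype.sum_prod_type']
  refine Finset.sum_nbij' (fun z => (Function.update z.1 i z.2, z.1 i))
    (fun z => (Function.update z.1 i z.2, z.1 i)) (by simp) (by simp) (by simp) (by simp) ?_
  rintro ⟨a, x⟩ -
  simp only
  congr 1
  rw [← Finset.mul_prod_erase univ _ (Finset.mem_univ i),
    ← Finset.mul_prod_erase univ (fun j => Function.update p i q j _) (Finset.mem_univ i)]
  simp only [Function.update_self]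
  have : ∏ j ∈ univ.erase i, Function.update p i q j (Function.update a i x j) =
      ∏ j ∈ univ.erase i, p j (a j) := by
    refine Finset.prod_congr rfl fun j hj => ?_
    have hj' : j ≠ i := (Finset.mem_erase.1 hj).1
    rw [Function.update_of_ne hj', Function.update_of_ne hj']
  rw [this]
  ring

theorem aux_dev {I : Type*} [Fintype I] [DecidableEq I] {A : I → Type*}
    [∀ i, Fintype (A i)] (p : ∀ i, A i → ℝ) (hp : ∀ i, IsProbVec (p i)) (i : I) (q : A i → ℝ)
    (hq : IsProbVec q) (F : (∀ j, A j) → ℝ) (C : ℝ)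
    (hF : ∀ a x, |F (Function.update a i x) - F a| ≤ C) :
    |∑ a : ∀ j, A j, (∏ j, Function.update p i q j (a j)) * F a -
      ∑ a : ∀ j, A j, (∏ j, p j (a j)) * F a| ≤ C := by
  have e1 : ∑ a : ∀ j, A j, (∏ j, Function.update p i q j (a j)) * F a =
      ∑ a : ∀ j, A j, ∑ x : A i, (∏ j, p j (a j)) * q x * F (Function.update a i x) := by
    rw [aux_swap]
    refine Finset.sum_congr rfl fun a _ => ?_
    rw [← Finset.sum_mul, ← Finset.mul_sum, (hp i).2, mul_one]
  have e2 : ∑ a : ∀ j, A j, (∏ j, p j (a j)) * F a =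
      ∑ a : ∀ j, A j, ∑ x : A i, (∏ j, p j (a j)) * q x * F a := by
    refine Finset.sum_congr rfl fun a _ => ?_
    rw [← Finset.sum_mul, ← Finset.mul_sum, hq.2, mul_one]
  have hJ : ∀ a : ∀ j, A j, 0 ≤ ∏ j, p j (a j) :=
    fun a => Finset.prod_nonneg fun j _ => (hp j).1 _
  rw [e1, e2, ← Finset.sum_sub_distrib]
  calc _ ≤ ∑ a : ∀ j, A j, (∏ j, p j (a j)) * C := by
        refine (Finset.abs_sum_le_sum_abs _ _).trans (Finset.sum_le_sum fun a _ => ?_)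
        rw [← Finset.sum_sub_distrib]
        calc _ ≤ ∑ x : A i, (∏ j, p j (a j)) * q x * C := by
              refine (Finset.abs_sum_le_sum_abs _ _).trans (Finset.sum_le_sum fun x _ => ?_)
              have hw := mul_nonneg (hJ a) (hq.1 x)
              rw [← mul_sub, abs_mul, abs_of_nonneg hw]
              exact mul_le_mul_of_nonneg_left (hF a x) hw
          _ = _ := by rw [← Finset.sum_mul, ← Finset.mul_sum, hq.2, mul_one]
    _ = C := by rw [← Finset.sum_mul, aux_sum_prod p hp, one_mul]

/-- Users of `e` other than `i`. -/
def nOther {E I : Type*} {A : I → Type*} [Fintype I] [DecidableEq I] [DecidableEq E]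
    (act : ∀ i, A i → Finset E) (i : I) (a : ∀ i, A i) (e : E) : ℕ :=
  ((univ.erase i).filter (fun j => e ∈ act j (a j))).card

theorem nUsers_eq {E I : Type*} {A : I → Type*} [Fintype I] [DecidableEq I] [DecidableEq E]
    (act : ∀ i, A i → Finset E) (i : I) (a : ∀ i, A i) (e : E) :
    nUsers act a e = nOther act i a e + if e ∈ act i (a i) then 1 else 0 := by
  unfold nUsers nOther
  conv_lhs => rw [← Finset.insert_erase (Finset.mem_univ i), Finset.filter_insert]
  split_ifs with h
  · rw [Finset.card_insert_of_notMem (by simp)]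
  · simp

theorem nOther_update {E I : Type*} {A : I → Type*} [Fintype I] [DecidableEq I] [DecidableEq E]
    (act : ∀ i, A i → Finset E) (i : I) (a : ∀ i, A i) (x : A i) (e : E) :
    nOther act i (Function.update a i x) e = nOther act i a e := by
  unfold nOther
  congr 1
  refine Finset.filter_congr fun j hj => ?_
  rw [Function.update_of_ne (Finset.mem_erase.1 hj).1]

theorem rosenthal_eq {S E I : Type*} {A : I → Type*} [Fintype I] [DecidableEq I]
    [Fintype E] [DecidableEq E]
    (act : ∀ i, A i → Finset E) (D : ℝ) (c : E → S → ℝ → ℝ) (i : I) (s : S) (a : ∀ i, A i) :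
    rosenthal act D c s a = congPay act D c i s a +
      ∑ e : E, ∑ j ∈ Finset.Icc 1 (nOther act i a e), c e s (j * D / (Fintype.card I)) := by
  unfold rosenthal congPay
  have : ∑ e ∈ act i (a i), c e s (waggr act D a e) =
      ∑ e : E, if e ∈ act i (a i) then c e s (waggr act D a e) else 0 := by
    rw [Finset.sum_ite_mem, Finset.univ_inter]
  rw [this, ← Finset.sum_add_distrib]
  refine Finset.sum_congr rfl fun e _ => ?_
  unfold waggr
  rw [nUsers_eq act i a e]
  split_ifs with h
  · rw [Finset.sum_Icc_succ_top (by omega), add_comm]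
    congr 2
    ring
  · simp

theorem waggr_dev {E I : Type*} {A : I → Type*} [Fintype I] [DecidableEq I]
    [Fintype E] [DecidableEq E]
    (act : ∀ i, A i → Finset E) (D : ℝ) (hD : 0 < D) (i : I) (a : ∀ i, A i) (x : A i) :
    ∑ e, |waggr act D (Function.update a i x) e - waggr act D a e| ≤
      Fintype.card E * (D / Fintype.card I) := by
  have : ∀ e ∈ (univ : Finset E), |waggr act D (Function.update a i x) e - waggr act D a e| ≤
      D / Fintype.card I := by
    intro e _
    have h0 : 0 ≤ D / (Fintype.card I : ℝ) := by positivity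
    unfold waggr
    rw [nUsers_eq act i a e, nUsers_eq act i (Function.update a i x) e, nOther_update,
      ← mul_sub, abs_mul, abs_of_nonneg h0]
    refine mul_le_of_le_one_right h0 ?_
    push_cast
    split_ifs <;> simp
  refine (Finset.sum_le_sum this).trans ?_
  simp

theorem aux_trans {S I : Type*} [Fintype S] [Fintype I] [DecidableEq I] {A : I → Type*}
    [∀ i, Fintype (A i)] (P : S → (∀ i, A i) → S → ℝ) (hP : IsKernel P)
    (π : ∀ i, S → A i → ℝ) (hπ : IsPolicy π) (s : S) : IsProbVec (transMat P π s) := by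
  have hJ : ∀ a : ∀ j, A j, 0 ≤ jointDist π s a :=
    fun a => Finset.prod_nonneg fun j _ => (hπ j s).1 _
  constructor
  · intro s'
    exact Finset.sum_nonneg fun a _ => mul_nonneg (hJ a) ((hP s a).1 s')
  · unfold transMat
    rw [Finset.sum_comm]
    have : ∀ a : ∀ j, A j, ∑ s', jointDist π s a * P s a s' = jointDist π s a := by
      intro a
      rw [← Finset.mul_sum, (hP s a).2, mul_one]
    simp only [this]
    exact aux_sum_prod (fun j => π j s) (fun j => hπ j s)

theorem aux_joint {S I : Type*} [Fintype I] [DecidableEq I] {A : I → Type*}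
    (π : ∀ i, S → A i → ℝ) (i : I) (q : S → A i → ℝ) (s : S) (a : ∀ j, A j) :
    jointDist (Function.update π i q) s a =
      ∏ j, Function.update (fun j => π j s) i (q s) j (a j) := by
  unfold jointDist
  refine Finset.prod_congr rfl fun j _ => ?_
  by_cases h : j = i
  · subst h; simp
  · simp [Function.update_of_ne h]

/-- **Proposition 1.** Markov congestion games are Markov `α`-potential games with
`α = 2ζ|S|Dδ|E|M/(n(1−δ))` and `α`-potential function the discounted Rosenthal potential. -/
theorem markov_congestion_game_is_alpha_potential
    {S E I : Type*} [Fintype S] [Nonempty S] [DecidableEq S]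
    [Fintype E] [Nonempty E] [DecidableEq E]
    [Fintype I] [Nonempty I] [DecidableEq I]
    {A : I → Type*} [∀ i, Fintype (A i)] [∀ i, Nonempty (A i)] [∀ i, DecidableEq (A i)]
    (δ : ℝ) (hδ : 0 < δ) (hδ1 : δ < 1)
    -- each action is a subset of the resource set E
    (act : ∀ i, A i → Finset E) (hact : ∀ i, Function.Injective (act i))
    (D : ℝ) (hD : 0 < D)
    -- nonnegative state-dependent resource rewards
    (c : E → S → ℝ → ℝ) (hc : ∀ e s x, 0 ≤ c e s x)
    -- the transition depends on actions only through the aggregate usage vector,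
    -- and is ζ-Lipschitz in it (ℓ¹ norm)
    (P : S → (∀ i, A i) → S → ℝ) (hP : IsKernel P)
    (Pbar : S → (E → ℝ) → S → ℝ)
    (hPw : ∀ s a s', P s a s' = Pbar s (waggr act D a) s')
    (ζ : ℝ) (hζ : 0 < ζ)
    (hLip : ∀ (s s' : S) (w w' : E → ℝ),
      |Pbar s w s' - Pbar s w' s'| ≤ ζ * ∑ e, |w e - w' e|)
    -- value functions of the players
    (V : I → (∀ j, S → A j → ℝ) → S → ℝ)
    (hV : ∀ i π, IsPolicy π → IsValueFun δ P (congPay act D c i) π (V i π))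
    -- the discounted Rosenthal potential
    (Φ : (∀ j, S → A j → ℝ) → S → ℝ)
    (hΦ : ∀ π, IsPolicy π → IsValueFun δ P (rosenthal act D c) π (Φ π))
    -- a uniform upper bound on Φ
    (M : ℝ) (hM0 : 0 ≤ M) (hM : ∀ π, IsPolicy π → ∀ s, Φ π s ≤ M) :
    ∀ (s : S) (i : I) (π : ∀ j, S → A j → ℝ), IsPolicy π →
      ∀ (πi' : S → A i → ℝ), (∀ s', IsProbVec (πi' s')) →
        |(Φ (Function.update π i πi') s - Φ π s) -
            (V i (Function.update π i πi') s - V i π s)| ≤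
          2 * ζ * (Fintype.card S) * D * δ * (Fintype.card E) * M /
            ((Fintype.card I) * (1 - δ)) := by
  intro s i π hπ q hq
  set π' := Function.update π i q with hπ'def
  have hπ' : IsPolicy π' := by
    intro j t
    by_cases h : j = i
    · subst h; simpa [hπ'def] using hq t
    · simpa [hπ'def, Function.update_of_ne h] using hπ j t
  have hT := aux_trans P hP π hπ
  have hT' := aux_trans P hP π' hπ'
  have hJ : ∀ t (a : ∀ j, A j), 0 ≤ jointDist π t a :=
    fun t a => Finset.prod_nonneg fun j _ => (hπ j t).1 _
  have hΦe := hΦ π hπ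
  have hΦe' := hΦ π' hπ'
  have hVe := hV i π hπ
  have hVe' := hV i π' hπ'
  set G : S → (∀ j, A j) → ℝ := fun t a =>
    ∑ e : E, ∑ j ∈ Finset.Icc 1 (nOther act i a e), c e t (j * D / (Fintype.card I)) with hG
  have hros : ∀ ρ t, expPay (rosenthal act D c) ρ t =
      expPay (congPay act D c i) ρ t + expPay G ρ t := by
    intro ρ t
    unfold expPay
    rw [← Finset.sum_add_distrib]
    refine Finset.sum_congr rfl fun a _ => ?_
    rw [rosenthal_eq act D c i, mul_add]
  have hGeq : ∀ t, expPay G π' t = expPay G π t := by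
    intro t
    have := aux_dev (fun j => π j t) (fun j => hπ j t) i (q t) (hq t) (G t) 0 (by
      intro a x
      simp [hG, nOther_update])
    have := abs_eq_zero.1 (le_antisymm this (abs_nonneg _))
    unfold expPay
    simp only [hπ'def, aux_joint]
    exact sub_eq_zero.1 this
  have hu0 : ∀ t, 0 ≤ expPay (congPay act D c i) π t := fun t =>
    Finset.sum_nonneg fun a _ => mul_nonneg (hJ t a) (Finset.sum_nonneg fun e _ => hc _ _ _)
  have hG0 : ∀ t, 0 ≤ expPay G π t := fun t =>
    Finset.sum_nonneg fun a _ => mul_nonneg (hJ t a)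
      (Finset.sum_nonneg fun e _ => Finset.sum_nonneg fun j _ => hc _ _ _)
  have hV0 : ∀ t, 0 ≤ V i π t := by
    intro t
    have := aux_max δ hδ hδ1 _ hT (fun t => - V i π t) 0 (by
      intro t
      simp only [mul_neg, Finset.sum_neg_distrib]
      have := hVe t
      have := hu0 t
      linarith) t
    simp at this
    exact this
  set Ψ : S → ℝ := fun t => Φ π t - V i π t with hΨ
  set Ψ' : S → ℝ := fun t => Φ π' t - V i π' t with hΨ'
  have hΨe : ∀ t, Ψ t = expPay G π t + δ * ∑ t', transMat P π t t' * Ψ t' := by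
    intro t
    simp only [hΨ, mul_sub, Finset.sum_sub_distrib]
    have h1 := hΦe t
    have h2 := hVe t
    have h3 := hros π t
    linarith
  have hΨe' : ∀ t, Ψ' t = expPay G π t + δ * ∑ t', transMat P π' t t' * Ψ' t' := by
    intro t
    simp only [hΨ', mul_sub, Finset.sum_sub_distrib]
    have h1 := hΦe' t
    have h2 := hVe' t
    have h3 := hros π' t
    have h4 := hGeq t
    linarith
  have hΨ0 : ∀ t, 0 ≤ Ψ t := by
    intro t
    have := aux_max δ hδ hδ1 _ hT (fun t => - Ψ t) 0 (by
      intro t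
      simp only [mul_neg, Finset.sum_neg_distrib]
      have := hΨe t
      have := hG0 t
      linarith) t
    simpa using this
  have hΨM : ∀ t, Ψ t ≤ M := fun t => by
    have := hM π hπ t
    have := hV0 t
    simp only [hΨ]; linarith
  set K : ℝ := ζ * (Fintype.card E * (D / Fintype.card I)) with hK
  have hK0 : 0 ≤ K := by positivity
  have hTd : ∀ t t', |transMat P π' t t' - transMat P π t t'| ≤ K := by
    intro t t'
    have := aux_dev (fun j => π j t) (fun j => hπ j t) i (q t) (hq t) (fun a => P t a t') K (by
      intro a x
      rw [hPw, hPw]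
      exact (hLip _ _ _ _).trans (mul_le_mul_of_nonneg_left (waggr_dev act D hD i a x) hζ.le))
    unfold transMat
    simp only [hπ'def, aux_joint]
    exact this
  set R : S → ℝ := fun t => ∑ t', (transMat P π' t t' - transMat P π t t') * Ψ t' with hR
  have hRb : ∀ t, |R t| ≤ Fintype.card S * (K * M) := by
    intro t
    refine (Finset.abs_sum_le_sum_abs _ _).trans ?_
    calc _ ≤ ∑ t' : S, K * M := by
          refine Finset.sum_le_sum fun t' _ => ?_
          rw [abs_mul, abs_of_nonneg (hΨ0 t')]
          exact mul_le_mul (hTd t t') (hΨM t') (hΨ0 t') hK0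
      _ = _ := by simp
  have hd : ∀ t, Ψ' t - Ψ t = δ * R t + δ * ∑ t', transMat P π' t t' * (Ψ' t' - Ψ t') := by
    intro t
    have h1 := hΨe t
    have h2 := hΨe' t
    simp only [hR, mul_sub, sub_mul, Finset.sum_sub_distrib]
    linarith
  set B : ℝ := δ * (Fintype.card S * (K * M)) with hB
  have hB0 : 0 ≤ B := by positivity
  have hup := aux_max δ hδ hδ1 _ hT' (fun t => Ψ' t - Ψ t) B (by
    intro t
    have h1 := hd t
    have h2 := mul_le_mul_of_nonneg_left (abs_le.1 (hRb t)).2 hδ.le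
    linarith) s
  have hlo := aux_max δ hδ hδ1 _ hT' (fun t => -(Ψ' t - Ψ t)) B (by
    intro t
    have h1 := hd t
    have h2 := mul_le_mul_of_nonneg_left (abs_le.1 (hRb t)).1 hδ.le
    simp only [mul_neg, Finset.sum_neg_distrib]
    linarith) s
  have hδ' : 0 < 1 - δ := by linarith
  have hn : (0 : ℝ) < Fintype.card I := by exact_mod_cast Fintype.card_pos
  have hfin : 2 * ζ * (Fintype.card S) * D * δ * (Fintype.card E) * M /
            ((Fintype.card I) * (1 - δ)) = 2 * (B / (1 - δ)) := by
    rw [hB, hK]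
    field_simp
  have hq0 : 0 ≤ B / (1 - δ) := by positivity
  rw [hfin]
  have e : (Φ π' s - Φ π s) - (V i π' s - V i π s) = Ψ' s - Ψ s := by
    simp only [hΨ, hΨ']; ring
  rw [e, abs_le]
  constructor <;> linarith
end

section
/- (Lemma 1: unilateral policy deviations perturb the induced transition matrix of a Markov congestion game by O(1/n).) Consider the Markov congestion game G_mcg described in the context. Then for every player i, all policies π_i, π_i' of player i, and every π_{-i}: max_{s∈S} ∑_{s'∈S} |P^{(π_i,π_{-i})}(s'|s) − P^{(π_i',π_{-i})}(s'|s)| ≤ 2·ζ·|S|·D·max_{a_i∈A_i}|a_i| / n. -/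
open Finset

lemma sum_waggr_update_le {E I : Type*} [Fintype E] [DecidableEq E] [Fintype I] [DecidableEq I]
    {A : I → Type*} (act : ∀ i, A i → Finset E) (D : ℝ) (hD : 0 < D)
    (a : ∀ i, A i) (i : I) (b : A i) :
    ∑ e, |waggr act D a e - waggr act D (Function.update a i b) e| ≤
      D / (Fintype.card I) * ((act i (a i)).card + (act i b).card) := by
  have key : ∀ e, |waggr act D a e - waggr act D (Function.update a i b) e| ≤
      D / (Fintype.card I) *
        ((if e ∈ act i (a i) then (1:ℝ) else 0) + (if e ∈ act i b then (1:ℝ) else 0)) := by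
    intro e
    have hc : 0 ≤ D / (Fintype.card I : ℝ) := by positivity
    have hn : ∀ x : (∀ i, A i), (nUsers act x e : ℝ) = (if e ∈ act i (x i) then (1:ℝ) else 0) +
        ∑ j ∈ univ.erase i, (if e ∈ act j (x j) then (1:ℝ) else 0) := by
      intro x
      rw [Finset.add_sum_erase univ (fun j => if e ∈ act j (x j) then (1:ℝ) else 0) (mem_univ i)]
      simp [nUsers]
    have hs : ∑ j ∈ univ.erase i, (if e ∈ act j (Function.update a i b j) then (1:ℝ) else 0) =
        ∑ j ∈ univ.erase i, (if e ∈ act j (a j) then (1:ℝ) else 0) := by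
      refine Finset.sum_congr rfl fun j hj => ?_
      rw [Function.update_of_ne (Finset.ne_of_mem_erase hj)]
    unfold waggr
    rw [← mul_sub, abs_mul, abs_of_nonneg hc]
    refine mul_le_mul_of_nonneg_left ?_ hc
    rw [hn a, hn (Function.update a i b), hs, add_sub_add_right_eq_sub, Function.update_self]
    split_ifs <;> norm_num
  refine (Finset.sum_le_sum fun e _ => key e).trans (le_of_eq ?_)
  rw [← Finset.mul_sum, Finset.sum_add_distrib]
  simp

lemma transMat_couple {S I : Type*} [Fintype S] [Fintype I] [DecidableEq I]
    {A : I → Type*} [∀ i, Fintype (A i)]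
    (P : S → (∀ i, A i) → S → ℝ) (π : ∀ j, S → A j → ℝ) (hπ : IsPolicy π) (i : I)
    (p : S → A i → ℝ) (s s' : S) :
    transMat P (Function.update π i p) s s' =
      ∑ x : (∀ j, A j) × A i,
        jointDist π s x.1 * p s x.2 * P s (Function.update x.1 i x.2) s' := by
  have h1 : transMat P (Function.update π i p) s s' =
      ∑ x : (∀ j, A j) × A i,
        jointDist (Function.update π i p) s x.1 * π i s x.2 * P s x.1 s' := by
    rw [Fintype.sum_prod_type]
    refine Finset.sum_congr rfl fun a _ => ?_
    simp only
    rw [← Finset.sum_mul, ← Finset.mul_sum, (hπ i s).2, mul_one]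
  rw [h1]
  have hj : ∀ (q : ∀ j, S → A j → ℝ) (a : ∀ j, A j), jointDist q s a =
      q i s (a i) * ∏ j ∈ univ.erase i, q j s (a j) := by
    intro q a
    exact (Finset.mul_prod_erase univ (fun j => q j s (a j)) (mem_univ i)).symm
  let f : (∀ j, A j) × A i → (∀ j, A j) × A i := fun x => (Function.update x.1 i x.2, x.1 i)
  have hf : Function.Involutive f := by
    intro x
    simp [f]
  symm
  refine Fintype.sum_equiv hf.toPerm _ _ fun x => ?_
  simp only [Function.Involutive.coe_toPerm, f]
  congr 1
  rw [hj, hj]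
  have hp : ∏ j ∈ univ.erase i, (Function.update π i p) j s (Function.update x.1 i x.2 j) =
      ∏ j ∈ univ.erase i, π j s (x.1 j) := by
    refine Finset.prod_congr rfl fun j hj => ?_
    rw [Function.update_of_ne (Finset.ne_of_mem_erase hj),
      Function.update_of_ne (Finset.ne_of_mem_erase hj)]
  rw [hp, Function.update_self, Function.update_self]
  ring

lemma jointDist_sum {S I : Type*} [Fintype I] [DecidableEq I]
    {A : I → Type*} [∀ i, Fintype (A i)] (π : ∀ j, S → A j → ℝ) (hπ : IsPolicy π) (s : S) :
    ∑ a, jointDist π s a = 1 := by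
  unfold jointDist
  rw [← Fintype.prod_sum]
  exact Finset.prod_eq_one fun j _ => (hπ j s).2

/-- **Lemma 1.** Unilateral policy deviations perturb the induced transition matrix of a
Markov congestion game by `O(1/n)`. -/
theorem congestion_transition_deviation_bound
    {S E I : Type*} [Fintype S] [Nonempty S] [DecidableEq S]
    [Fintype E] [Nonempty E] [DecidableEq E]
    [Fintype I] [Nonempty I] [DecidableEq I]
    {A : I → Type*} [∀ i, Fintype (A i)] [∀ i, Nonempty (A i)] [∀ i, DecidableEq (A i)]
    -- each action is a subset of the resource set E
    (act : ∀ i, A i → Finset E) (hact : ∀ i, Function.Injective (act i))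
    (D : ℝ) (hD : 0 < D)
    -- the transition depends on actions only through the aggregate usage vector,
    -- and is ζ-Lipschitz in it (ℓ¹ norm)
    (P : S → (∀ i, A i) → S → ℝ) (hP : IsKernel P)
    (Pbar : S → (E → ℝ) → S → ℝ)
    (hPw : ∀ s a s', P s a s' = Pbar s (waggr act D a) s')
    (ζ : ℝ) (hζ : 0 < ζ)
    (hLip : ∀ (s s' : S) (w w' : E → ℝ),
      |Pbar s w s' - Pbar s w' s'| ≤ ζ * ∑ e, |w e - w' e|) :
    ∀ (i : I) (π : ∀ j, S → A j → ℝ), IsPolicy π →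
      ∀ (πi' : S → A i → ℝ), (∀ s, IsProbVec (πi' s)) →
        ∀ s : S, ∑ s' : S,
            |transMat P π s s' - transMat P (Function.update π i πi') s s'| ≤
          2 * ζ * (Fintype.card S) * D *
            (Finset.univ.sup' Finset.univ_nonempty (fun ai : A i => (act i ai).card)) /
            (Fintype.card I) := by
  intro i π hπ p hp s
  set M : ℕ := Finset.univ.sup' Finset.univ_nonempty (fun ai : A i => (act i ai).card) with hM
  have hcard : ∀ b : A i, ((act i b).card : ℝ) ≤ M := fun b => by
    exact_mod_cast Finset.le_sup' (fun ai : A i => (act i ai).card) (mem_univ b)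
  set C : ℝ := ζ * (D / (Fintype.card I) * (M + M)) with hC
  have hc : 0 ≤ D / (Fintype.card I : ℝ) := by positivity
  have hb : ∀ s', |transMat P π s s' - transMat P (Function.update π i p) s s'| ≤ C := by
    intro s'
    have h0 : transMat P π s s' =
        ∑ x : (∀ j, A j) × A i, jointDist π s x.1 * p s x.2 * P s x.1 s' := by
      rw [Fintype.sum_prod_type]
      refine Finset.sum_congr rfl fun a _ => ?_
      simp only
      rw [← Finset.sum_mul, ← Finset.mul_sum, (hp s).2, mul_one]
    have hw1 : ∑ x : (∀ j, A j) × A i, jointDist π s x.1 * p s x.2 = 1 := by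
      rw [Fintype.sum_prod_type]
      simp only
      simp_rw [← Finset.mul_sum, (hp s).2, mul_one]
      exact jointDist_sum π hπ s
    rw [h0, transMat_couple P π hπ i p s s', ← Finset.sum_sub_distrib]
    calc _ ≤ ∑ x : (∀ j, A j) × A i, |jointDist π s x.1 * p s x.2 * P s x.1 s' -
            jointDist π s x.1 * p s x.2 * P s (Function.update x.1 i x.2) s'| :=
          Finset.abs_sum_le_sum_abs _ _
      _ ≤ ∑ x : (∀ j, A j) × A i, jointDist π s x.1 * p s x.2 * C := by
          refine Finset.sum_le_sum fun x _ => ?_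
          have hw : 0 ≤ jointDist π s x.1 * p s x.2 :=
            mul_nonneg (Finset.prod_nonneg fun j _ => (hπ j s).1 _) ((hp s).1 _)
          rw [← mul_sub, abs_mul, abs_of_nonneg hw]
          refine mul_le_mul_of_nonneg_left ?_ hw
          rw [hPw, hPw]
          refine (hLip _ _ _ _).trans (mul_le_mul_of_nonneg_left ?_ hζ.le)
          refine (sum_waggr_update_le act D hD x.1 i x.2).trans ?_
          exact mul_le_mul_of_nonneg_left (add_le_add (hcard _) (hcard _)) hc
      _ = C := by rw [← Finset.sum_mul, hw1, one_mul]
  refine (Finset.sum_le_sum fun s' _ => hb s').trans (le_of_eq ?_)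
  rw [Finset.sum_const, nsmul_eq_mul, Finset.card_univ, hC]
  ring
end

section
/- (Proposition 2: perturbed Markov team games are Markov α-potential games with α = 2κ/(1−δ)².) Consider a finite Markov game in which each player's one-stage payoff decomposes as u_i(s,a) = r(s,a) + ξ_i(s,a), where r : S × A → ℝ is a common team payoff and the perturbations satisfy |ξ_i(s,a)| ≤ κ for all i ∈ I, s ∈ S, a ∈ A, for some κ ≥ 0. For each profile π, let Φ(·,π) : S → ℝ be the unique solution of Φ(s,π) = r(s,π) + δ·∑_{s'∈S} P^π(s'|s)·Φ(s',π), where r(s,π) = ∑_{a∈A} π(s,a)·r(s,a). Then for every state s, every player i, all policies π_i, π_i' of player i, and every π_{-i}: |(Φ(s,(π_i',π_{-i})) − Φ(s,(π_i,π_{-i}))) − (V_i(s,(π_i',π_{-i})) − V_i(s,(π_i,π_{-i})))| ≤ 2κ/(1−δ)². -/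
open Finset

theorem jointDist_nonneg_aux {S I : Type*} [Fintype I] {A : I → Type*} [∀ i, Fintype (A i)]
    (π : ∀ i, S → A i → ℝ) (h : IsPolicy π) (s : S) (a : ∀ i, A i) : 0 ≤ jointDist π s a :=
  Finset.prod_nonneg fun i _ => (h i s).1 (a i)

theorem jointDist_sum_aux {S I : Type*} [Fintype I] [DecidableEq I]
    {A : I → Type*} [∀ i, Fintype (A i)]
    (π : ∀ i, S → A i → ℝ) (h : IsPolicy π) (s : S) : ∑ a : ∀ i, A i, jointDist π s a = 1 := by
  unfold jointDist
  rw [← Fintype.prod_sum (fun i => π i s)]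
  exact Finset.prod_eq_one fun i _ => (h i s).2

theorem avg_bound_aux {α : Type*} [Fintype α] (p f : α → ℝ) (hp : IsProbVec p) (c : ℝ)
    (hf : ∀ a, |f a| ≤ c) : |∑ a, p a * f a| ≤ c := by
  calc |∑ a, p a * f a| ≤ ∑ a, |p a * f a| := Finset.abs_sum_le_sum_abs _ _
    _ ≤ ∑ a, p a * c := by
        refine Finset.sum_le_sum fun a _ => ?_
        rw [abs_mul, abs_of_nonneg (hp.1 a)]
        exact mul_le_mul_of_nonneg_left (hf a) (hp.1 a)
    _ = c := by rw [← Finset.sum_mul, hp.2, one_mul]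

theorem transMat_prob_aux {S I : Type*} [Fintype S] [Fintype I] [DecidableEq I]
    {A : I → Type*} [∀ i, Fintype (A i)]
    (P : S → (∀ i, A i) → S → ℝ) (hP : IsKernel P)
    (π : ∀ i, S → A i → ℝ) (h : IsPolicy π) (s : S) : IsProbVec (transMat P π s) := by
  refine ⟨fun s' => Finset.sum_nonneg fun a _ =>
    mul_nonneg (jointDist_nonneg_aux π h s a) ((hP s a).1 s'), ?_⟩
  unfold transMat
  rw [Finset.sum_comm]
  simp_rw [← Finset.mul_sum]
  rw [← jointDist_sum_aux π h s]
  exact Finset.sum_congr rfl fun a _ => by rw [(hP s a).2, mul_one]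

theorem diff_bound_aux {S I : Type*} [Fintype S] [Nonempty S] [Fintype I] [DecidableEq I]
    {A : I → Type*} [∀ i, Fintype (A i)]
    (δ : ℝ) (hδ : 0 < δ) (hδ1 : δ < 1)
    (P : S → (∀ i, A i) → S → ℝ) (hP : IsKernel P)
    (r ξ u : S → (∀ i, A i) → ℝ) (hu : ∀ s a, u s a = r s a + ξ s a)
    (κ : ℝ) (hξ : ∀ s a, |ξ s a| ≤ κ)
    (π : ∀ i, S → A i → ℝ) (h : IsPolicy π) (V Φ : S → ℝ)
    (hV : IsValueFun δ P u π V) (hΦ : IsValueFun δ P r π Φ) (s : S) :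
    |V s - Φ s| ≤ κ / (1 - δ) := by
  obtain ⟨m, hm⟩ := Finite.exists_max fun s => |V s - Φ s|
  refine (hm s).trans ?_
  have e : V m - Φ m = ∑ a, jointDist π m a * ξ m a
      + δ * ∑ s', transMat P π m s' * (V s' - Φ s') := by
    have h1 : expPay u π m = expPay r π m + ∑ a, jointDist π m a * ξ m a := by
      unfold expPay
      rw [← Finset.sum_add_distrib]
      exact Finset.sum_congr rfl fun a _ => by rw [hu]; ring
    have h2 : ∑ s', transMat P π m s' * (V s' - Φ s') =
        ∑ s', transMat P π m s' * V s' - ∑ s', transMat P π m s' * Φ s' := by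
      rw [← Finset.sum_sub_distrib]
      exact Finset.sum_congr rfl fun a _ => by ring
    rw [hV m, hΦ m, h1, h2]; ring
  have b1 := avg_bound_aux (jointDist π m) (ξ m)
    ⟨jointDist_nonneg_aux π h m, jointDist_sum_aux π h m⟩ κ (hξ m)
  have b2 := avg_bound_aux (transMat P π m) (fun s' => V s' - Φ s')
    (transMat_prob_aux P hP π h m) _ hm
  have b3 := abs_add_le (∑ a, jointDist π m a * ξ m a)
    (δ * ∑ s', transMat P π m s' * (V s' - Φ s'))
  rw [← e, abs_mul, abs_of_pos hδ] at b3
  have b4 := mul_le_mul_of_nonneg_left b2 hδ.le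
  rw [le_div_iff₀ (by linarith)]
  linarith

/-- **Proposition 2.** Perturbed Markov team games are Markov `α`-potential games
with `α = 2κ/(1-δ)²`. -/
theorem perturbed_markov_team_game_is_alpha_potential
    {S I : Type*} [Fintype S] [Nonempty S] [DecidableEq S]
    [Fintype I] [Nonempty I] [DecidableEq I]
    {A : I → Type*} [∀ i, Fintype (A i)] [∀ i, Nonempty (A i)] [∀ i, DecidableEq (A i)]
    (δ : ℝ) (hδ : 0 < δ) (hδ1 : δ < 1)
    (P : S → (∀ i, A i) → S → ℝ) (hP : IsKernel P)
    (r : S → (∀ i, A i) → ℝ) (ξ : I → S → (∀ i, A i) → ℝ)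
    (u : I → S → (∀ i, A i) → ℝ) (hu : ∀ i s a, u i s a = r s a + ξ i s a)
    (κ : ℝ) (hκ : 0 ≤ κ) (hξ : ∀ i s a, |ξ i s a| ≤ κ)
    (V : I → (∀ j, S → A j → ℝ) → S → ℝ)
    (hV : ∀ i π, IsPolicy π → IsValueFun δ P (u i) π (V i π))
    (Φ : (∀ j, S → A j → ℝ) → S → ℝ)
    (hΦ : ∀ π, IsPolicy π → IsValueFun δ P r π (Φ π)) :
    ∀ (s : S) (i : I) (π : ∀ j, S → A j → ℝ), IsPolicy π →
      ∀ (πi' : S → A i → ℝ), (∀ s', IsProbVec (πi' s')) →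
        |(Φ (Function.update π i πi') s - Φ π s) -
            (V i (Function.update π i πi') s - V i π s)| ≤ 2 * κ / (1 - δ) ^ 2 := by
  intro s i π hπ πi' hπi'
  have hπ' : IsPolicy (Function.update π i πi') := by
    intro j t
    by_cases hj : j = i
    · subst hj; simpa using hπi' t
    · simpa [Function.update_of_ne hj] using hπ j t
  have h1 := diff_bound_aux δ hδ hδ1 P hP r (ξ i) (u i) (hu i) κ (hξ i) π hπ _ _
    (hV i π hπ) (hΦ π hπ) s
  have h2 := diff_bound_aux δ hδ hδ1 P hP r (ξ i) (u i) (hu i) κ (hξ i) _ hπ' _ _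
    (hV i _ hπ') (hΦ _ hπ') s
  have h3 : κ / (1 - δ) ≤ κ / (1 - δ) ^ 2 := by
    apply div_le_div_of_nonneg_left hκ (by nlinarith) (by nlinarith)
  rw [abs_le] at h1 h2
  rw [mul_div_assoc, abs_le]
  constructor <;> linarith [h1.1, h1.2, h2.1, h2.2]
end

section
/- (Proposition 3, part 1: maximizers of an α-potential function are α-stationary Nash equilibria.) Suppose the finite Markov game is a Markov α-potential game with α-potential function Φ, and suppose π* is a policy profile such that Φ(s,π*) ≥ Φ(s,π) for every state s ∈ S and every profile π. Then π* is an α-stationary Nash equilibrium: for every player i, every policy π_i of player i, and every probability distribution μ on S, V_i(μ,π*) ≥ V_i(μ,(π_i,π*_{-i})) − α. -/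
open Finset

/-- **Proposition 3, part 1.** Maximizers of an `α`-potential function are
`α`-stationary Nash equilibria. -/
theorem potential_maximizer_is_alpha_nash
    {S I : Type*} [Fintype S] [Nonempty S] [DecidableEq S]
    [Fintype I] [Nonempty I] [DecidableEq I]
    {A : I → Type*} [∀ i, Fintype (A i)] [∀ i, Nonempty (A i)] [∀ i, DecidableEq (A i)]
    (δ : ℝ) (hδ : 0 < δ) (hδ1 : δ < 1)
    (P : S → (∀ i, A i) → S → ℝ) (hP : IsKernel P)
    (u : I → S → (∀ i, A i) → ℝ)
    (α : ℝ) (hα : 0 ≤ α)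
    (V : I → (∀ j, S → A j → ℝ) → S → ℝ)
    (hV : ∀ i π, IsPolicy π → IsValueFun δ P (u i) π (V i π))
    (Φ : (∀ j, S → A j → ℝ) → S → ℝ)
    (hpot : ∀ (s : S) (i : I) (π : ∀ j, S → A j → ℝ), IsPolicy π →
      ∀ (πi' : S → A i → ℝ), (∀ s', IsProbVec (πi' s')) →
        |(Φ (Function.update π i πi') s - Φ π s) -
          (V i (Function.update π i πi') s - V i π s)| ≤ α)
    (πstar : ∀ j, S → A j → ℝ) (hπstar : IsPolicy πstar)
    (hmax : ∀ (s : S) (π : ∀ j, S → A j → ℝ), IsPolicy π → Φ π s ≤ Φ πstar s) :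
    ∀ (i : I) (πi : S → A i → ℝ), (∀ s, IsProbVec (πi s)) →
      ∀ (μ : S → ℝ), IsProbVec μ →
        (∑ s, μ s * V i πstar s) ≥
          (∑ s, μ s * V i (Function.update πstar i πi) s) - α := by
  intro i πi hπi μ hμ
  have hpol : IsPolicy (Function.update πstar i πi) := by
    intro j s
    by_cases h : j = i
    · subst h
      simpa using hπi s
    · simpa [Function.update_of_ne h] using hπstar j s
  have key : ∀ s, V i (Function.update πstar i πi) s ≤ V i πstar s + α := by
    intro s
    have h1 := (abs_le.mp (hpot s i πstar hπstar πi hπi)).1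
    have h2 := hmax s _ hpol
    linarith
  have h3 : ∑ s, μ s * V i (Function.update πstar i πi) s ≤ ∑ s, μ s * (V i πstar s + α) :=
    Finset.sum_le_sum fun s _ => mul_le_mul_of_nonneg_left (key s) (hμ.1 s)
  have h4 : ∑ s, μ s * (V i πstar s + α) = (∑ s, μ s * V i πstar s) + α := by
    simp only [mul_add, Finset.sum_add_distrib, ← Finset.sum_mul, hμ.2, one_mul]
  linarith
end

section
/- (Proposition 3, part 2: approximate equilibria of the associated Markov potential game are approximate equilibria of the Markov α-potential game.) Let G be a finite Markov game that is a Markov α-potential game with α-potential function Φ and value functions V_i. Let Ĝ be another finite Markov game with the same state set S, player set I, action sets A_i, and discount factor δ, with value functions V̂_i (defined by the Bellman equation for Ĝ's payoffs and transitions), such that Φ is an exact potential for Ĝ: for every state s, every player i, every policy π_i' of player i, and every profile π, V̂_i(s,(π_i',π_{-i})) − V̂_i(s,π) = Φ(s,(π_i',π_{-i})) − Φ(s,π). If π̃ is an ε-stationary Nash equilibrium of Ĝ (i.e., V̂_i(μ,π̃) ≥ V̂_i(μ,(π_i,π̃_{-i})) − ε for every player i, every policy π_i of player i, and every distribution μ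 on S), then π̃ is an (ε+α)-stationary Nash equilibrium of G: V_i(μ,π̃) ≥ V_i(μ,(π_i,π̃_{-i})) − (ε+α) for every i, π_i, and μ. -/
open Finset

/-- **Proposition 3, part 2.** Approximate equilibria of the associated Markov potential game
are approximate equilibria of the Markov `α`-potential game. -/
theorem approx_equilibria_transfer
    {S I : Type*} [Fintype S] [Nonempty S] [DecidableEq S]
    [Fintype I] [Nonempty I] [DecidableEq I]
    {A : I → Type*} [∀ i, Fintype (A i)] [∀ i, Nonempty (A i)] [∀ i, DecidableEq (A i)]
    (δ : ℝ) (hδ : 0 < δ) (hδ1 : δ < 1)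
    -- the Markov α-potential game G
    (P : S → (∀ i, A i) → S → ℝ) (hP : IsKernel P)
    (u : I → S → (∀ i, A i) → ℝ)
    (V : I → (∀ j, S → A j → ℝ) → S → ℝ)
    (hV : ∀ i π, IsPolicy π → IsValueFun δ P (u i) π (V i π))
    (α : ℝ) (hα : 0 ≤ α)
    (Φ : (∀ j, S → A j → ℝ) → S → ℝ)
    (hpot : ∀ (s : S) (i : I) (π : ∀ j, S → A j → ℝ), IsPolicy π →
      ∀ (πi' : S → A i → ℝ), (∀ s', IsProbVec (πi' s')) →
        |(Φ (Function.update π i πi') s - Φ π s) -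
          (V i (Function.update π i πi') s - V i π s)| ≤ α)
    -- the associated game Ĝ with the same states, players, actions and discount factor
    (Phat : S → (∀ i, A i) → S → ℝ) (hPhat : IsKernel Phat)
    (uhat : I → S → (∀ i, A i) → ℝ)
    (Vhat : I → (∀ j, S → A j → ℝ) → S → ℝ)
    (hVhat : ∀ i π, IsPolicy π → IsValueFun δ Phat (uhat i) π (Vhat i π))
    -- Φ is an exact potential for Ĝ
    (hexact : ∀ (s : S) (i : I) (π : ∀ j, S → A j → ℝ), IsPolicy π →
      ∀ (πi' : S → A i → ℝ), (∀ s', IsProbVec (πi' s')) →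
        Vhat i (Function.update π i πi') s - Vhat i π s =
          Φ (Function.update π i πi') s - Φ π s)
    -- π̃ is an ε-stationary Nash equilibrium of Ĝ
    (ε : ℝ) (πt : ∀ j, S → A j → ℝ) (hπt : IsPolicy πt)
    (hNE : ∀ (i : I) (πi : S → A i → ℝ), (∀ s, IsProbVec (πi s)) →
      ∀ (μ : S → ℝ), IsProbVec μ →
        (∑ s, μ s * Vhat i πt s) ≥ (∑ s, μ s * Vhat i (Function.update πt i πi) s) - ε) :
    -- conclusion: π̃ is an (ε+α)-stationary Nash equilibrium of G
    ∀ (i : I) (πi : S → A i → ℝ), (∀ s, IsProbVec (πi s)) →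
      ∀ (μ : S → ℝ), IsProbVec μ →
        (∑ s, μ s * V i πt s) ≥
          (∑ s, μ s * V i (Function.update πt i πi) s) - (ε + α) := by
  intro i πi hπi μ hμ
  have h1 := hNE i πi hπi μ hμ
  have h2 : ∑ s, μ s * (V i (Function.update πt i πi) s - V i πt s)
      ≤ ∑ s, μ s * ((Vhat i (Function.update πt i πi) s - Vhat i πt s) + α) := by
    apply Finset.sum_le_sum
    intro s _
    apply mul_le_mul_of_nonneg_left _ (hμ.1 s)
    have h3 := (abs_le.1 (hpot s i πt hπt πi hπi)).1
    have h4 := hexact s i πt hπt πi hπi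
    linarith
  simp only [mul_add, mul_sub, Finset.sum_add_distrib, Finset.sum_sub_distrib,
    ← Finset.sum_mul, hμ.2] at h2
  linarith
end

section
/- (Theorem 1: Nash-regret bound for projected gradient ascent in Markov α-potential games.) Consider a finite Markov game with payoffs u_i(s,a) ∈ [0,1] for all i, s, a, and write Ā = max_{i∈I}|A_i|. Suppose the game is a Markov α-potential game with α-potential function Φ; let C_Φ > 0 satisfy |Φ(μ',π) − Φ(μ',π')| ≤ C_Φ for all distributions μ' on S and all profiles π, π'. Let μ be an initial distribution, and suppose ν is a probability distribution on S and κ̃ ≥ 1 a constant such that d_μ^π(s) ≤ κ̃·ν(s) for every profile π and every state s. Fix T ≥ 1 and take step size η = (1−δ)^{5/2}·√(C_Φ + |I|²·α·T) / (2·|I|·Ā·√T), and assume η ≤ (1−δ)/√Ā. Then the projected gradient-ascent iterates π^{(0)},…,π^{(T)} satisfy Nash-regret(T) ≤ 6√2·√(κ̃·Ā·|I|)·(1−δ)^{−9/4}·(C_Φ/T + |I|²·α)^{1/4}. -/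
open Finset

section Helpers

variable {S : Type*} {I : Type*} {A : I → Type*}

lemma proj_var {X : Type*} [Fintype X] (x y : X → ℝ) (h : IsProjSimplex x y) (z : X → ℝ)
    (hz : IsProbVec z) : ∑ a, (x a - y a) * (z a - y a) ≤ 0 := by
  obtain ⟨hy, hmin⟩ := h
  set B := ∑ a, (x a - y a) * (z a - y a) with hB
  set C := ∑ a, (z a - y a) ^ 2 with hC
  have hC0 : 0 ≤ C := Finset.sum_nonneg (fun a _ => sq_nonneg _)
  have key : ∀ l : ℝ, 0 < l → l ≤ 1 → 2 * B ≤ l * C := by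
    intro l hl hl1
    have hw : IsProbVec (fun a => y a + l * (z a - y a)) := by
      constructor
      · intro a
        have h1 := hy.1 a
        have h2 := hz.1 a
        nlinarith
      · rw [Finset.sum_add_distrib, ← Finset.mul_sum, Finset.sum_sub_distrib, hy.2, hz.2]; ring
    have h1 := hmin _ hw
    unfold l2norm at h1
    rw [Real.sqrt_le_sqrt_iff (Finset.sum_nonneg (fun a _ => sq_nonneg _))] at h1
    have h2 : ∑ a, (y a + l * (z a - y a) - x a) ^ 2
        = ∑ a, (y a - x a) ^ 2 - 2 * l * B + l ^ 2 * C := by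
      rw [hB, hC, Finset.mul_sum, Finset.mul_sum, ← Finset.sum_sub_distrib,
        ← Finset.sum_add_distrib]
      exact Finset.sum_congr rfl (fun a _ => by ring)
    rw [h2] at h1
    have : l * (2 * B) ≤ l * (l * C) := by nlinarith
    exact le_of_mul_le_mul_left this hl
  by_contra hcon
  push Not at hcon
  have h3 := key (B / (B + C)) (by positivity) (by rw [div_le_one (by positivity)]; linarith)
  have h4 : B / (B + C) * C ≤ B := by
    rw [div_mul_eq_mul_div, div_le_iff₀ (by positivity)]; nlinarith
  linarith

/-- one-step facts for the projected ascent -/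
lemma step_facts {X : Type*} [Fintype X] (p y q : X → ℝ) (η g Ab : ℝ) (hη : 0 < η) (hg : 0 < g)
    (hcard : (Fintype.card X : ℝ) ≤ Ab) (hAb : 0 < Ab)
    (hsmall : η ≤ g / Real.sqrt Ab) (hq : ∀ a, |q a| ≤ 1 / g)
    (hp : IsProbVec p)
    (h : IsProjSimplex (fun a => p a + η * q a) y) :
    ((1 / η) * ∑ a, (y a - p a) ^ 2 ≤ ∑ a, q a * (y a - p a)) ∧
    (∑ a, |y a - p a| ≤ η * Ab / g) ∧
    (∀ z, IsProbVec z → ∑ a, q a * (z a - p a) ≤ 3 / η * Real.sqrt (∑ a, (y a - p a) ^ 2)) := by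
  have hvar := proj_var _ _ h
  have hy := h.1
  set n2 := ∑ a, (y a - p a) ^ 2 with hn2
  have hn20 : 0 ≤ n2 := Finset.sum_nonneg (fun a _ => sq_nonneg _)
  have ha : n2 ≤ η * ∑ a, q a * (y a - p a) := by
    have h1 := hvar p hp
    have h2 : ∑ a, (p a + η * q a - y a) * (p a - y a) = n2 - η * ∑ a, q a * (y a - p a) := by
      rw [hn2, Finset.mul_sum, ← Finset.sum_sub_distrib]
      exact Finset.sum_congr rfl (fun a _ => by ring)
    rw [h2] at h1; linarith
  refine ⟨?_, ?_, ?_⟩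
  · rw [div_mul_eq_mul_div, one_mul, div_le_iff₀ hη]; linarith
  · set L := ∑ a, |y a - p a| with hL
    have hL0 : 0 ≤ L := Finset.sum_nonneg (fun a _ => abs_nonneg _)
    have h1 : L ^ 2 ≤ Ab * n2 := by
      have := sq_sum_le_card_mul_sum_sq (s := (Finset.univ : Finset X)) (f := fun a => |y a - p a|)
      simp only [sq_abs, Finset.card_univ] at this
      exact this.trans (mul_le_mul_of_nonneg_right hcard hn20)
    have h2 : ∑ a, q a * (y a - p a) ≤ 1 / g * L := by
      rw [hL, Finset.mul_sum]
      refine Finset.sum_le_sum (fun a _ => ?_)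
      calc q a * (y a - p a) ≤ |q a * (y a - p a)| := le_abs_self _
        _ = |q a| * |y a - p a| := abs_mul _ _
        _ ≤ _ := mul_le_mul_of_nonneg_right (hq a) (abs_nonneg _)
    have h3 : L * L ≤ η * Ab / g * L := by
      calc L * L = L ^ 2 := by ring
        _ ≤ Ab * n2 := h1
        _ ≤ Ab * (η * (1 / g * L)) := by gcongr; exact ha.trans (by gcongr)
        _ = _ := by ring
    rcases hL0.eq_or_lt with h0 | h0
    · rw [← h0]; positivity
    · exact le_of_mul_le_mul_right h3 h0
  · intro z hz
    set n := Real.sqrt n2 with hn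
    have hnn : 0 ≤ n := Real.sqrt_nonneg _
    have hnsq : n ^ 2 = n2 := Real.sq_sqrt hn20
    have h1 : η * ∑ a, q a * (z a - y a) ≤ ∑ a, (y a - p a) * (z a - y a) := by
      have h1 := hvar z hz
      have h2 : ∑ a, (p a + η * q a - y a) * (z a - y a)
          = η * ∑ a, q a * (z a - y a) - ∑ a, (y a - p a) * (z a - y a) := by
        rw [Finset.mul_sum, ← Finset.sum_sub_distrib]
        exact Finset.sum_congr rfl (fun a _ => by ring)
      rw [h2] at h1; linarith
    have le1 : ∀ w : X → ℝ, IsProbVec w → ∀ a, w a ≤ 1 := by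
      intro w hw a
      rw [← hw.2]
      exact Finset.single_le_sum (fun b _ => hw.1 b) (Finset.mem_univ a)
    have hz2 : ∑ a, (z a - y a) ^ 2 ≤ 2 := by
      have : ∑ a, (z a - y a) ^ 2 ≤ ∑ a, (z a + y a) := by
        refine Finset.sum_le_sum (fun a _ => ?_)
        have := le1 z hz a; have := le1 y hy a; have := hz.1 a; have := hy.1 a
        nlinarith
      rw [Finset.sum_add_distrib, hz.2, hy.2] at this; linarith
    have h2 : ∑ a, (y a - p a) * (z a - y a) ≤ 2 * n := by
      have cs := Finset.sum_mul_sq_le_sq_mul_sq Finset.univ (fun a => y a - p a) (fun a => z a - y a)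
      refine abs_le_of_sq_le_sq' ?_ (by positivity) |>.2
      refine cs.trans ?_
      rw [mul_pow, hnsq]
      nlinarith
    have hq2 : (η ^ 2) * ∑ a, q a ^ 2 ≤ 1 := by
      have h3 : ∑ a, q a ^ 2 ≤ Ab * (1 / g) ^ 2 := by
        calc ∑ a, q a ^ 2 ≤ ∑ _a : X, (1 / g) ^ 2 :=
              Finset.sum_le_sum (fun a _ => sq_le_sq.2 (by rw [abs_of_pos (by positivity : 0 < 1 / g)]; exact hq a))
          _ = (Fintype.card X : ℝ) * (1 / g) ^ 2 := by simp
          _ ≤ _ := by gcongr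
      have h4 : η ^ 2 ≤ g ^ 2 / Ab := by
        calc η ^ 2 ≤ (g / Real.sqrt Ab) ^ 2 := by gcongr
          _ = _ := by rw [div_pow, Real.sq_sqrt hAb.le]
      calc _ ≤ g ^ 2 / Ab * (Ab * (1 / g) ^ 2) := by gcongr
        _ = 1 := by field_simp
    have h3 : η * ∑ a, q a * (y a - p a) ≤ n := by
      have cs := Finset.sum_mul_sq_le_sq_mul_sq Finset.univ q (fun a => y a - p a)
      refine abs_le_of_sq_le_sq' ?_ (by positivity) |>.2
      rw [mul_pow, hnsq]
      calc η ^ 2 * (∑ a, q a * (y a - p a)) ^ 2 ≤ η ^ 2 * ((∑ a, q a ^ 2) * n2) := by gcongr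
        _ = (η ^ 2 * ∑ a, q a ^ 2) * n2 := by ring
        _ ≤ 1 * n2 := by gcongr
        _ = n2 := one_mul _
    have h4 : ∑ a, q a * (z a - p a) = ∑ a, q a * (z a - y a) + ∑ a, q a * (y a - p a) := by
      rw [← Finset.sum_add_distrib]
      exact Finset.sum_congr rfl (fun a _ => by ring)
    rw [h4, div_mul_eq_mul_div, le_div_iff₀ hη]
    nlinarith

lemma sum_joint [Fintype I] [DecidableEq I] [∀ i, Fintype (A i)] (p : ∀ i, A i → ℝ) :
    ∑ a : ∀ j, A j, ∏ j, p j (a j) = ∏ j, ∑ x, p j x := by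
  rw [Finset.prod_univ_sum]; simp

lemma joint_l1 [Fintype I] [DecidableEq I] [∀ i, Fintype (A i)] (p q : ∀ i, A i → ℝ)
    (hp : ∀ i, IsProbVec (p i)) (hq : ∀ i, IsProbVec (q i)) (J : Finset I) :
    ∑ a : ∀ j, A j, |∏ j, (J.piecewise p q) j (a j) - ∏ j, q j (a j)| ≤
      ∑ j ∈ J, ∑ x, |p j x - q j x| := by
  induction J using Finset.induction_on with
  | empty => simp
  | insert k J hk ih =>
    rw [Finset.sum_insert hk]
    set r := J.piecewise p q with hr
    have hrp : ∀ j, IsProbVec (r j) := by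
      intro j; rw [hr]; by_cases h : j ∈ J <;> simp [h, hp, hq]
    have hrk : r k = q k := by simp [hr, hk]
    have h1 : ∀ a : ∀ j, A j, |∏ j, ((insert k J).piecewise p q) j (a j) - ∏ j, r j (a j)|
        = ∏ j, (Function.update r k (fun x => |p k x - q k x|)) j (a j) := by
      intro a
      rw [Finset.piecewise_insert]
      rw [← Finset.mul_prod_erase _ _ (Finset.mem_univ k),
        ← Finset.mul_prod_erase _ (fun j => r j (a j)) (Finset.mem_univ k),
        ← Finset.mul_prod_erase _ (fun j => Function.update r k (fun x => |p k x - q k x|) j (a j))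
          (Finset.mem_univ k)]
      have e : ∀ f : A k → ℝ, ∏ j ∈ Finset.univ.erase k, Function.update r k f j (a j)
          = ∏ j ∈ Finset.univ.erase k, r j (a j) := by
        intro f
        refine Finset.prod_congr rfl (fun j hj => ?_)
        rw [Function.update_of_ne (Finset.ne_of_mem_erase hj)]
      rw [e, e, ← sub_mul, abs_mul, abs_of_nonneg (Finset.prod_nonneg (fun j _ => (hrp j).1 _))]
      simp [hrk]
    have h2 : ∑ a : ∀ j, A j, ∏ j, (Function.update r k (fun x => |p k x - q k x|)) j (a j)
        = ∑ x, |p k x - q k x| := by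
      rw [sum_joint, ← Finset.mul_prod_erase _ _ (Finset.mem_univ k)]
      rw [Finset.prod_eq_one, mul_one]
      · simp
      · intro j hj
        rw [Function.update_of_ne (Finset.ne_of_mem_erase hj)]
        exact (hrp j).2
    calc _ ≤ ∑ a : ∀ j, A j, (|∏ j, ((insert k J).piecewise p q) j (a j) - ∏ j, r j (a j)|
          + |∏ j, r j (a j) - ∏ j, q j (a j)|) :=
          Finset.sum_le_sum (fun a _ => abs_sub_le _ _ _)
      _ ≤ _ := by
          rw [Finset.sum_add_distrib, Finset.sum_congr rfl (fun a _ => h1 a), h2]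
          linarith

lemma joint_prob [Fintype I] [DecidableEq I] [∀ i, Fintype (A i)] (π : ∀ i, S → A i → ℝ)
    (hπ : IsPolicy π) (s : S) : IsProbVec (jointDist π s) := by
  constructor
  · intro a; exact Finset.prod_nonneg (fun j _ => (hπ j s).1 _)
  · unfold jointDist
    rw [sum_joint (fun j => π j s)]
    exact Finset.prod_eq_one (fun j _ => (hπ j s).2)

lemma jointDist_l1 [Fintype I] [DecidableEq I] [∀ i, Fintype (A i)] (π σ : ∀ i, S → A i → ℝ)
    (hπ : IsPolicy π) (hσ : IsPolicy σ) (ε : ℝ) (s : S)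
    (h : ∀ j, ∑ x, |σ j s x - π j s x| ≤ ε) :
    ∑ a, |jointDist σ s a - jointDist π s a| ≤ Fintype.card I * ε := by
  have := joint_l1 (fun j => σ j s) (fun j => π j s) (fun j => hσ j s) (fun j => hπ j s) Finset.univ
  simp only [Finset.piecewise_univ] at this
  refine this.trans ((Finset.sum_le_sum (fun j _ => h j)).trans ?_)
  simp

lemma transMat_prob [Fintype S] [Fintype I] [DecidableEq I] [∀ i, Fintype (A i)]
    (P : S → (∀ i, A i) → S → ℝ) (hP : IsKernel P) (π : ∀ i, S → A i → ℝ)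
    (hπ : IsPolicy π) (s : S) : IsProbVec (transMat P π s) := by
  have hj := joint_prob π hπ s
  constructor
  · intro s'; exact Finset.sum_nonneg (fun a _ => mul_nonneg (hj.1 a) ((hP s a).1 s'))
  · unfold transMat
    rw [Finset.sum_comm]
    simp_rw [← Finset.mul_sum]
    rw [← hj.2]
    refine Finset.sum_congr rfl (fun a _ => ?_)
    rw [(hP s a).2, mul_one]

lemma contraction_bound [Fintype S] [Nonempty S] (δ : ℝ) (hδ : 0 < δ) (hδ1 : δ < 1)
    (M : S → S → ℝ) (hM : ∀ s, IsProbVec (M s)) (W g : S → ℝ)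
    (hW : ∀ s, W s = g s + δ * ∑ s', M s s' * W s') (b : ℝ) (hb : ∀ s, g s ≤ b) :
    ∀ s, W s ≤ b / (1 - δ) := by
  obtain ⟨m, hm⟩ := Finite.exists_max W
  have h1 : ∑ s', M m s' * W s' ≤ W m := by
    calc _ ≤ ∑ s', M m s' * W m :=
          Finset.sum_le_sum (fun s' _ => mul_le_mul_of_nonneg_left (hm s') ((hM m).1 s'))
      _ = W m := by rw [← Finset.sum_mul, (hM m).2, one_mul]
  intro s
  refine (hm s).trans ?_
  rw [le_div_iff₀ (by linarith)]
  have := hW m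
  have := hb m
  nlinarith

lemma dvisit_props [Fintype S] [DecidableEq S] [Fintype I] [DecidableEq I]
    [∀ i, Fintype (A i)] (δ : ℝ) (hδ : 0 < δ) (hδ1 : δ < 1) (P : S → (∀ i, A i) → S → ℝ)
    (hP : IsKernel P) (π : ∀ i, S → A i → ℝ) (hπ : IsPolicy π) (μ : S → ℝ) (hμ : IsProbVec μ) :
    (∀ s, 0 ≤ dvisit δ P π μ s) ∧
    (∀ s', dvisit δ P π μ s' = (1 - δ) * μ s' + δ * ∑ s, dvisit δ P π μ s * transMat P π s s') := by
  have hM := transMat_prob P hP π hπ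
  set c : ℕ → S → ℝ := fun k s => ∑ s0, μ s0 * ((Matrix.of (transMat P π)) ^ k) s0 s with hc
  have hsucc : ∀ k s', c (k + 1) s' = ∑ s, c k s * transMat P π s s' := by
    intro k s'
    simp only [hc, pow_succ, Matrix.mul_apply, Matrix.of_apply, Finset.mul_sum, Finset.sum_mul]
    rw [Finset.sum_comm]
    exact Finset.sum_congr rfl (fun _ _ => Finset.sum_congr rfl (fun _ _ => by ring))
  have h0 : ∀ s, c 0 s = μ s := by
    intro s; simp [hc, Matrix.one_apply]
  have hcp : ∀ k, IsProbVec (c k) := by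
    intro k
    induction k with
    | zero => exact ⟨fun s => by rw [h0]; exact hμ.1 s, by simp_rw [h0]; exact hμ.2⟩
    | succ k ih =>
      refine ⟨fun s => ?_, ?_⟩
      · rw [hsucc]; exact Finset.sum_nonneg (fun x _ => mul_nonneg (ih.1 x) ((hM x).1 s))
      · simp_rw [hsucc]
        rw [Finset.sum_comm]
        simp_rw [← Finset.mul_sum, (hM _).2, mul_one]
        exact ih.2
  have hsum : ∀ s, Summable (fun k => δ ^ k * c k s) := by
    intro s
    refine Summable.of_nonneg_of_le (fun k => mul_nonneg (by positivity) ((hcp k).1 s)) (fun k => ?_)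
      (summable_geometric_of_lt_one hδ.le hδ1)
    have : c k s ≤ 1 := by
      rw [← (hcp k).2]; exact Finset.single_le_sum (fun b _ => (hcp k).1 b) (Finset.mem_univ s)
    exact mul_le_of_le_one_right (by positivity) this
  have hd : ∀ s, dvisit δ P π μ s = (1 - δ) * ∑' k, δ ^ k * c k s := fun s => rfl
  refine ⟨fun s => ?_, fun s' => ?_⟩
  · rw [hd]
    exact mul_nonneg (by linarith) (tsum_nonneg (fun k => mul_nonneg (by positivity) ((hcp k).1 s)))
  · simp_rw [hd]
    rw [(hsum s').tsum_eq_zero_add]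
    have h1 : HasSum (fun k => δ ^ (k + 1) * c (k + 1) s')
        (∑ s, δ * ((∑' k, δ ^ k * c k s) * transMat P π s s')) := by
      have : HasSum (fun k => ∑ s, δ * ((δ ^ k * c k s) * transMat P π s s'))
          (∑ s, δ * ((∑' k, δ ^ k * c k s) * transMat P π s s')) :=
        hasSum_sum (fun s _ => ((hsum s).hasSum.mul_right _).mul_left _)
      convert this using 2 with k
      rw [hsucc, Finset.mul_sum]
      exact Finset.sum_congr rfl (fun _ _ => by ring)
    rw [h1.tsum_eq, h0, pow_zero, one_mul, mul_add, Finset.mul_sum, Finset.mul_sum]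
    congr 1
    exact Finset.sum_congr rfl (fun _ _ => by ring)

lemma dvisit_sum [Fintype S] [DecidableEq S] [Fintype I] [DecidableEq I]
    [∀ i, Fintype (A i)] (δ : ℝ) (hδ : 0 < δ) (hδ1 : δ < 1) (P : S → (∀ i, A i) → S → ℝ)
    (hP : IsKernel P) (π : ∀ i, S → A i → ℝ) (hπ : IsPolicy π) (μ : S → ℝ) (hμ : IsProbVec μ)
    (W g : S → ℝ) (hW : ∀ s, W s = g s + δ * ∑ s', transMat P π s s' * W s') :
    ∑ s, dvisit δ P π μ s * g s = (1 - δ) * ∑ s, μ s * W s := by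
  obtain ⟨-, hrec⟩ := dvisit_props δ hδ hδ1 P hP π hπ μ hμ
  set d := dvisit δ P π μ
  have h1 : ∑ s, d s * g s = ∑ s, d s * W s - ∑ s, d s * (δ * ∑ s', transMat P π s s' * W s') := by
    rw [← Finset.sum_sub_distrib]
    refine Finset.sum_congr rfl (fun s _ => ?_)
    have := hW s
    rw [← mul_sub]; congr 1; linarith
  have h2 : ∑ s, d s * (δ * ∑ s', transMat P π s s' * W s')
      = ∑ s', (δ * ∑ s, d s * transMat P π s s') * W s' := by
    simp only [Finset.mul_sum, Finset.sum_mul]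
    rw [Finset.sum_comm]
    exact Finset.sum_congr rfl (fun _ _ => Finset.sum_congr rfl (fun _ _ => by ring))
  rw [h1, h2, ← Finset.sum_sub_distrib, Finset.mul_sum]
  refine Finset.sum_congr rfl (fun s _ => ?_)
  have := hrec s
  rw [← sub_mul, ← mul_assoc]; congr 1; linarith

lemma dvisit_prob [Fintype S] [DecidableEq S] [Fintype I] [DecidableEq I]
    [∀ i, Fintype (A i)] (δ : ℝ) (hδ : 0 < δ) (hδ1 : δ < 1) (P : S → (∀ i, A i) → S → ℝ)
    (hP : IsKernel P) (π : ∀ i, S → A i → ℝ) (hπ : IsPolicy π) (μ : S → ℝ) (hμ : IsProbVec μ) :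
    IsProbVec (dvisit δ P π μ) := by
  refine ⟨(dvisit_props δ hδ hδ1 P hP π hπ μ hμ).1, ?_⟩
  have := dvisit_sum δ hδ hδ1 P hP π hπ μ hμ (fun _ => 1) (fun _ => 1 - δ) (by
    intro s; simp [(transMat_prob P hP π hπ s).2])
  rw [← Finset.sum_mul] at this
  simp only [mul_one, hμ.2] at this
  have h : (1 - δ) ≠ 0 := by linarith
  field_simp at this
  exact this

lemma dvisit_ge [Fintype S] [DecidableEq S] [Fintype I] [DecidableEq I]
    [∀ i, Fintype (A i)] (δ : ℝ) (hδ : 0 < δ) (hδ1 : δ < 1) (P : S → (∀ i, A i) → S → ℝ)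
    (hP : IsKernel P) (π : ∀ i, S → A i → ℝ) (hπ : IsPolicy π) (μ : S → ℝ) (hμ : IsProbVec μ)
    (s : S) : (1 - δ) * μ s ≤ dvisit δ P π μ s := by
  obtain ⟨h0, hrec⟩ := dvisit_props δ hδ hδ1 P hP π hπ μ hμ
  rw [hrec s]
  have : 0 ≤ ∑ s', dvisit δ P π μ s' * transMat P π s' s :=
    Finset.sum_nonneg (fun x _ => mul_nonneg (h0 x) ((transMat_prob P hP π hπ x).1 s))
  nlinarith

lemma bell_eq [Fintype S] [Fintype I] [DecidableEq I] [∀ i, Fintype (A i)]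
    (δ : ℝ) (P : S → (∀ i, A i) → S → ℝ) (u : S → (∀ i, A i) → ℝ)
    (π : ∀ i, S → A i → ℝ) (V : S → ℝ) (s : S) :
    expPay u π s + δ * ∑ s', transMat P π s s' * V s'
      = ∑ a, jointDist π s a * (u s a + δ * ∑ s', P s a s' * V s') := by
  unfold expPay transMat
  simp only [mul_add, Finset.sum_add_distrib]
  congr 1
  simp only [Finset.sum_mul, Finset.mul_sum]
  rw [Finset.sum_comm]
  exact Finset.sum_congr rfl (fun _ _ => Finset.sum_congr rfl (fun _ _ => by ring))

lemma Q_sum [Fintype S] [Fintype I] [DecidableEq I] [∀ i, Fintype (A i)]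
    [∀ i, DecidableEq (A i)]
    (δ : ℝ) (P : S → (∀ i, A i) → S → ℝ) (u : S → (∀ i, A i) → ℝ)
    (π : ∀ i, S → A i → ℝ) (V : S → ℝ) (i : I) (s : S) (p : S → A i → ℝ) :
    ∑ x, p s x * Qfun δ P u π V i s x
      = ∑ a, jointDist (Function.update π i p) s a * (u s a + δ * ∑ s', P s a s' * V s') := by
  unfold Qfun jointDist
  simp only [Finset.mul_sum (s := (Finset.univ : Finset (∀ j, A j)))]
  rw [Finset.sum_comm]
  refine Finset.sum_congr rfl (fun a _ => ?_)
  simp only [mul_ite, mul_zero, Finset.sum_ite_eq, Finset.mem_univ, if_true]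
  rw [← Finset.mul_prod_erase _ (fun j => Function.update π i p j s (a j)) (Finset.mem_univ i)]
  have e : ∏ j ∈ Finset.univ.erase i, Function.update π i p j s (a j)
      = ∏ j ∈ Finset.univ.erase i, π j s (a j) := by
    refine Finset.prod_congr rfl (fun j hj => ?_)
    rw [Function.update_of_ne (Finset.ne_of_mem_erase hj)]
  rw [e, Function.update_self]; ring

lemma Q_eq [Fintype S] [Fintype I] [DecidableEq I] [∀ i, Fintype (A i)]
    [∀ i, DecidableEq (A i)]
    (δ : ℝ) (P : S → (∀ i, A i) → S → ℝ) (u : S → (∀ i, A i) → ℝ)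
    (π : ∀ i, S → A i → ℝ) (V : S → ℝ) (i : I) (s : S) (x : A i) :
    Qfun δ P u π V i s x
      = ∑ a, jointDist (Function.update π i (fun _ y => if y = x then 1 else 0)) s a *
        (u s a + δ * ∑ s', P s a s' * V s') := by
  rw [← Q_sum]; simp

lemma policy_update [Fintype I] [DecidableEq I] [∀ i, Fintype (A i)]
    (π : ∀ i, S → A i → ℝ) (hπ : IsPolicy π) (i : I) (p : S → A i → ℝ)
    (hp : ∀ s, IsProbVec (p s)) : IsPolicy (Function.update π i p) := by
  intro j s
  by_cases h : j = i
  · subst h; simpa using hp s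
  · rw [Function.update_of_ne h]; exact hπ j s

lemma ind_prob {X : Type*} [Fintype X] [DecidableEq X] (x : X) :
    IsProbVec (fun y : X => if y = x then (1:ℝ) else 0) := by
  constructor
  · intro a; dsimp only; split_ifs <;> norm_num
  · simp

lemma value_bound [Fintype S] [Nonempty S] [Fintype I] [DecidableEq I] [∀ i, Fintype (A i)]
    (δ : ℝ) (hδ : 0 < δ) (hδ1 : δ < 1)
    (P : S → (∀ i, A i) → S → ℝ) (hP : IsKernel P) (u : S → (∀ i, A i) → ℝ)
    (hu : ∀ s a, u s a ∈ Set.Icc (0:ℝ) 1)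
    (π : ∀ i, S → A i → ℝ) (hπ : IsPolicy π) (V : S → ℝ) (hV : IsValueFun δ P u π V) (s : S) :
    0 ≤ V s ∧ V s ≤ 1 / (1 - δ) := by
  have hM := transMat_prob P hP π hπ
  have hj := joint_prob π hπ
  constructor
  · have := contraction_bound δ hδ hδ1 _ hM (fun s => - V s) (fun s => - expPay u π s) (by
      intro s; simp only [mul_neg, Finset.sum_neg_distrib]; rw [hV s]; ring) 0 (by
      intro s
      have : 0 ≤ expPay u π s :=
        Finset.sum_nonneg (fun a _ => mul_nonneg ((hj s).1 a) (hu s a).1)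
      linarith) s
    simp at this; exact this
  · refine contraction_bound δ hδ hδ1 _ hM V _ hV 1 (fun s => ?_) s
    unfold expPay
    rw [← (hj s).2]
    exact Finset.sum_le_sum (fun a _ => mul_le_of_le_one_right ((hj s).1 a) (hu s a).2)

lemma R_bound [Fintype S] 
    (δ : ℝ) (hδ : 0 < δ) (hδ1 : δ < 1)
    (P : S → (∀ i, A i) → S → ℝ) (hP : IsKernel P) (u : S → (∀ i, A i) → ℝ)
    (hu : ∀ s a, u s a ∈ Set.Icc (0:ℝ) 1)
    (V : S → ℝ) (hV : ∀ s, 0 ≤ V s ∧ V s ≤ 1 / (1 - δ)) (s : S) (a : ∀ i, A i) :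
    |u s a + δ * ∑ s', P s a s' * V s'| ≤ 1 / (1 - δ) := by
  have h0 : 0 ≤ ∑ s', P s a s' * V s' :=
    Finset.sum_nonneg (fun x _ => mul_nonneg ((hP s a).1 x) (hV x).1)
  have h1 : ∑ s', P s a s' * V s' ≤ 1 / (1 - δ) := by
    calc _ ≤ ∑ s', P s a s' * (1 / (1 - δ)) :=
          Finset.sum_le_sum (fun x _ => mul_le_mul_of_nonneg_left (hV x).2 ((hP s a).1 x))
      _ = _ := by rw [← Finset.sum_mul, (hP s a).2, one_mul]
  have h2 : 1 + δ * (1 / (1 - δ)) = 1 / (1 - δ) := by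
    have : 1 - δ ≠ 0 := by linarith
    field_simp; ring
  have := hu s a
  rw [abs_of_nonneg (add_nonneg this.1 (mul_nonneg hδ.le h0)), ← h2]
  have := this.2
  gcongr

lemma abs_sum_mul_le {X : Type*} [Fintype X] (f g : X → ℝ) (b : ℝ) (hg : ∀ x, |g x| ≤ b) :
    |∑ x, f x * g x| ≤ (∑ x, |f x|) * b := by
  refine (Finset.abs_sum_le_sum_abs _ _).trans ?_
  rw [Finset.sum_mul]
  refine Finset.sum_le_sum (fun x _ => ?_)
  rw [abs_mul]
  exact mul_le_mul_of_nonneg_left (hg x) (abs_nonneg _)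

lemma Q_bound [Fintype S] [Nonempty S] [Fintype I] [DecidableEq I] [∀ i, Fintype (A i)]
    [∀ i, DecidableEq (A i)]
    (δ : ℝ) (hδ : 0 < δ) (hδ1 : δ < 1)
    (P : S → (∀ i, A i) → S → ℝ) (hP : IsKernel P) (u : S → (∀ i, A i) → ℝ)
    (hu : ∀ s a, u s a ∈ Set.Icc (0:ℝ) 1)
    (π : ∀ i, S → A i → ℝ) (hπ : IsPolicy π) (V : S → ℝ) (hV : IsValueFun δ P u π V)
    (i : I) (s : S) (x : A i) : |Qfun δ P u π V i s x| ≤ 1 / (1 - δ) := by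
  rw [Q_eq]
  have hj := joint_prob _ (policy_update π hπ i (fun _ y => if y = x then 1 else 0)
    (fun _ => ind_prob x)) s
  refine (abs_sum_mul_le _ _ _ (R_bound δ hδ hδ1 P hP u hu V
    (value_bound δ hδ hδ1 P hP u hu π hπ V hV) s)).trans ?_
  simp_rw [abs_of_nonneg (hj.1 _)]
  rw [hj.2, one_mul]

/-- value functions are Lipschitz in the profile -/
lemma V_lip [Fintype S] [Nonempty S] [Fintype I] [DecidableEq I] [∀ i, Fintype (A i)]
    (δ : ℝ) (hδ : 0 < δ) (hδ1 : δ < 1)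
    (P : S → (∀ i, A i) → S → ℝ) (hP : IsKernel P) (u : S → (∀ i, A i) → ℝ)
    (hu : ∀ s a, u s a ∈ Set.Icc (0:ℝ) 1)
    (π σ : ∀ i, S → A i → ℝ) (hπ : IsPolicy π) (hσ : IsPolicy σ) (V V' : S → ℝ)
    (hV : IsValueFun δ P u π V) (hV' : IsValueFun δ P u σ V') (ε : ℝ)
    (h : ∀ j s, ∑ x, |σ j s x - π j s x| ≤ ε) (s : S) :
    |V' s - V s| ≤ Fintype.card I * ε * (1 / (1 - δ)) / (1 - δ) := by
  have hM := transMat_prob P hP σ hσ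
  set g : S → ℝ := fun s => ∑ a, (jointDist σ s a - jointDist π s a) *
    (u s a + δ * ∑ s', P s a s' * V s') with hg
  have hgb : ∀ s, |g s| ≤ Fintype.card I * ε * (1 / (1 - δ)) := by
    intro s
    refine (abs_sum_mul_le _ _ _ (R_bound δ hδ hδ1 P hP u hu V
      (value_bound δ hδ hδ1 P hP u hu π hπ V hV) s)).trans ?_
    have : 0 < 1 - δ := by linarith
    gcongr
    exact jointDist_l1 π σ hπ hσ ε s (fun j => h j s)
  have hW : ∀ s, V' s - V s = g s + δ * ∑ s', transMat P σ s s' * (V' s' - V s') := by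
    intro s
    have e1 := bell_eq δ P u σ V s
    have e2 := bell_eq δ P u π V s
    have e3 : g s = ∑ a, jointDist σ s a * (u s a + δ * ∑ s', P s a s' * V s')
        - ∑ a, jointDist π s a * (u s a + δ * ∑ s', P s a s' * V s') := by
      rw [hg, ← Finset.sum_sub_distrib]
      exact Finset.sum_congr rfl (fun _ _ => by ring)
    rw [e3, ← e1, ← e2, ← hV s, hV' s]
    simp only [mul_sub, Finset.sum_sub_distrib]
    ring
  rw [abs_le]
  constructor
  · have := contraction_bound δ hδ hδ1 _ hM (fun s => - (V' s - V s)) (fun s => - g s) (by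
      intro s
      simp only [mul_neg, Finset.sum_neg_distrib]
      have := hW s
      linarith) _ (fun s => (neg_le_abs (g s)).trans (hgb s)) s
    linarith
  · exact contraction_bound δ hδ hδ1 _ hM (fun s => (V' s - V s)) g hW _
      (fun s => (le_abs_self (g s)).trans (hgb s)) s

lemma Q_lip [Fintype S] [Nonempty S] [Fintype I] [DecidableEq I] [∀ i, Fintype (A i)]
    [∀ i, DecidableEq (A i)]
    (δ : ℝ) (hδ : 0 < δ) (hδ1 : δ < 1)
    (P : S → (∀ i, A i) → S → ℝ) (hP : IsKernel P) (u : S → (∀ i, A i) → ℝ)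
    (hu : ∀ s a, u s a ∈ Set.Icc (0:ℝ) 1)
    (π σ : ∀ i, S → A i → ℝ) (hπ : IsPolicy π) (hσ : IsPolicy σ) (V V' : S → ℝ)
    (hV : IsValueFun δ P u π V) (hV' : IsValueFun δ P u σ V') (ε : ℝ) (hε : 0 ≤ ε)
    (h : ∀ j s, ∑ x, |σ j s x - π j s x| ≤ ε) (i : I) (s : S) (x : A i) :
    |Qfun δ P u σ V' i s x - Qfun δ P u π V i s x| ≤ Fintype.card I * ε / (1 - δ) ^ 2 := by
  have hlip := V_lip δ hδ hδ1 P hP u hu π σ hπ hσ V V' hV hV' ε h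
  set b := Fintype.card I * ε * (1 / (1 - δ)) / (1 - δ) with hb
  rw [Q_eq, Q_eq]
  set e : S → A i → ℝ := fun _ y => if y = x then 1 else 0 with he
  have hσ' := policy_update σ hσ i e (fun _ => ind_prob x)
  have hπ' := policy_update π hπ i e (fun _ => ind_prob x)
  have hjl := jointDist_l1 _ _ hπ' hσ' ε s (by
    intro j
    by_cases hji : j = i
    · subst hji; simpa using hε
    · rw [Function.update_of_ne hji, Function.update_of_ne hji]; exact h j s)
  have hj := joint_prob _ hπ' s
  have hγ : 0 < 1 - δ := by linarith
  set jσ := jointDist (Function.update σ i e) s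
  set jπ := jointDist (Function.update π i e) s
  have split : ∑ a, jσ a * (u s a + δ * ∑ s', P s a s' * V' s')
      - ∑ a, jπ a * (u s a + δ * ∑ s', P s a s' * V s')
      = ∑ a, (jσ a - jπ a) * (u s a + δ * ∑ s', P s a s' * V' s')
        + ∑ a, jπ a * (δ * ∑ s', P s a s' * (V' s' - V s')) := by
    rw [← Finset.sum_sub_distrib, ← Finset.sum_add_distrib]
    refine Finset.sum_congr rfl (fun a _ => ?_)
    simp only [mul_sub, Finset.sum_sub_distrib]
    ring
  rw [split]
  have h1 : |∑ a, (jσ a - jπ a) * (u s a + δ * ∑ s', P s a s' * V' s')|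
      ≤ Fintype.card I * ε * (1 / (1 - δ)) := by
    refine (abs_sum_mul_le _ _ _ (R_bound δ hδ hδ1 P hP u hu V'
      (value_bound δ hδ hδ1 P hP u hu σ hσ V' hV') s)).trans ?_
    gcongr
  have h2 : |∑ a, jπ a * (δ * ∑ s', P s a s' * (V' s' - V s'))| ≤ δ * b := by
    refine (abs_sum_mul_le _ _ (δ * b) (fun a => ?_)).trans ?_
    · rw [abs_mul, abs_of_pos hδ]
      gcongr
      refine (abs_sum_mul_le _ _ b hlip).trans ?_
      simp_rw [abs_of_nonneg ((hP s a).1 _)]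
      rw [(hP s a).2, one_mul]
    · simp_rw [abs_of_nonneg (hj.1 _)]
      rw [hj.2, one_mul]
  refine (abs_add_le _ _).trans ((add_le_add h1 h2).trans (le_of_eq ?_))
  rw [hb]
  field_simp
  ring

/-- performance difference lemma for unilateral deviations -/
lemma perf_diff [Fintype S] [DecidableEq S] [Fintype I] [DecidableEq I]
    [∀ i, Fintype (A i)] [∀ i, DecidableEq (A i)]
    (δ : ℝ) (hδ : 0 < δ) (hδ1 : δ < 1)
    (P : S → (∀ i, A i) → S → ℝ) (hP : IsKernel P) (u : S → (∀ i, A i) → ℝ)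
    (π : ∀ i, S → A i → ℝ) (hπ : IsPolicy π) (i : I) (p : S → A i → ℝ)
    (hp : ∀ s, IsProbVec (p s)) (V V' : S → ℝ)
    (hV : IsValueFun δ P u π V) (hV' : IsValueFun δ P u (Function.update π i p) V')
    (μ : S → ℝ) (hμ : IsProbVec μ) :
    ∑ s, dvisit δ P (Function.update π i p) μ s * ∑ x, Qfun δ P u π V i s x * (p s x - π i s x)
      = (1 - δ) * (∑ s, μ s * V' s - ∑ s, μ s * V s) := by
  have hσ := policy_update π hπ i p hp
  rw [dvisit_sum δ hδ hδ1 P hP _ hσ μ hμ (fun s => V' s - V s)]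
  · congr 1
    rw [← Finset.sum_sub_distrib]
    exact Finset.sum_congr rfl (fun _ _ => by ring)
  · intro s
    have e1 := Q_sum δ P u π V i s p
    have e2 := Q_sum δ P u π V i s (π i)
    rw [Function.update_eq_self] at e2
    have e3 : ∑ x, Qfun δ P u π V i s x * (p s x - π i s x)
        = ∑ x, p s x * Qfun δ P u π V i s x - ∑ x, π i s x * Qfun δ P u π V i s x := by
      rw [← Finset.sum_sub_distrib]
      exact Finset.sum_congr rfl (fun _ _ => by ring)
    rw [e3, e1, e2, ← bell_eq, ← bell_eq, ← hV s, hV' s]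
    simp only [mul_sub, Finset.sum_sub_distrib]
    ring

lemma pot_step [Fintype S] [Nonempty S] [DecidableEq S] [Fintype I] [DecidableEq I]
    [∀ i, Fintype (A i)] [∀ i, DecidableEq (A i)]
    (δ : ℝ) (hδ : 0 < δ) (hδ1 : δ < 1)
    (P : S → (∀ i, A i) → S → ℝ) (hP : IsKernel P)
    (u : I → S → (∀ i, A i) → ℝ) (hu : ∀ i s a, u i s a ∈ Set.Icc (0:ℝ) 1)
    (α : ℝ)
    (V : I → (∀ j, S → A j → ℝ) → S → ℝ)
    (hV : ∀ i π, IsPolicy π → IsValueFun δ P (u i) π (V i π))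
    (Φ : (∀ j, S → A j → ℝ) → S → ℝ)
    (hpot : ∀ (s : S) (i : I) (π : ∀ j, S → A j → ℝ), IsPolicy π →
      ∀ (πi' : S → A i → ℝ), (∀ s', IsProbVec (πi' s')) →
        |(Φ (Function.update π i πi') s - Φ π s) -
          (V i (Function.update π i πi') s - V i π s)| ≤ α)
    (ν : S → ℝ) (hν : IsProbVec ν) (η : ℝ) (hη : 0 < η) (ε : ℝ) (hε : 0 ≤ ε)
    (π π' : ∀ j, S → A j → ℝ) (hπ : IsPolicy π) (hπ' : IsPolicy π')
    (hquad : ∀ k s, (1 / η) * ∑ x, (π' k s x - π k s x) ^ 2 ≤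
      ∑ x, Qfun δ P (u k) π (V k π) k s x * (π' k s x - π k s x))
    (hl1 : ∀ k s, ∑ x, |π' k s x - π k s x| ≤ ε) (J : Finset I) :
    ∑ k ∈ J, ((1 / η) * (∑ s, ν s * ∑ x, (π' k s x - π k s x) ^ 2)
        - (α + Fintype.card I * ε ^ 2 / (1 - δ) ^ 3))
      ≤ ∑ s, ν s * Φ (J.piecewise π' π) s - ∑ s, ν s * Φ π s := by
  have hγ : 0 < 1 - δ := by linarith
  induction J using Finset.induction_on with
  | empty => simp
  | insert k J hk ih =>
    rw [Finset.sum_insert hk, Finset.piecewise_insert]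
    set σ := J.piecewise π' π with hσd
    have hσ : IsPolicy σ := by
      intro j; rw [hσd]; by_cases h : j ∈ J <;> simp [h, hπ j, hπ' j]
    have hσk : σ k = π k := by simp [hσd, hk]
    have hσl : ∀ j s, ∑ x, |σ j s x - π j s x| ≤ ε := by
      intro j s
      by_cases h : j ∈ J
      · simpa [hσd, h] using hl1 j s
      · simpa [hσd, h] using hε
    have hτ := policy_update σ hσ k (π' k) (hπ' k)
    have hpd := perf_diff δ hδ hδ1 P hP (u k) σ hσ k (π' k) (hπ' k) _ _ (hV k σ hσ)
      (hV k _ hτ) ν hν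
    have hd := dvisit_prob δ hδ hδ1 P hP _ hτ ν hν
    have hdge := dvisit_ge δ hδ hδ1 P hP _ hτ ν hν
    set τ := Function.update σ k (π' k)
    set d := dvisit δ P τ ν
    have hinner : ∀ s, (1 / η) * ∑ x, (π' k s x - π k s x) ^ 2
        - Fintype.card I * ε ^ 2 / (1 - δ) ^ 2
        ≤ ∑ x, Qfun δ P (u k) σ (V k σ) k s x * (π' k s x - σ k s x) := by
      intro s
      rw [hσk]
      have h1 := hquad k s
      have h2 : |∑ x, (π' k s x - π k s x) *
          (Qfun δ P (u k) σ (V k σ) k s x - Qfun δ P (u k) π (V k π) k s x)|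
          ≤ ε * (Fintype.card I * ε / (1 - δ) ^ 2) := by
        refine (abs_sum_mul_le _ _ _ (Q_lip δ hδ hδ1 P hP (u k) (hu k) π σ hπ hσ _ _ (hV k π hπ)
          (hV k σ hσ) ε hε hσl k s)).trans ?_
        gcongr
        exact hl1 k s
      have h3 : ∑ x, Qfun δ P (u k) σ (V k σ) k s x * (π' k s x - π k s x)
          = ∑ x, Qfun δ P (u k) π (V k π) k s x * (π' k s x - π k s x)
            + ∑ x, (π' k s x - π k s x) *
          (Qfun δ P (u k) σ (V k σ) k s x - Qfun δ P (u k) π (V k π) k s x) := by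
        rw [← Finset.sum_add_distrib]
        exact Finset.sum_congr rfl (fun _ _ => by ring)
      have h4 := (abs_le.1 h2).1
      have h5 : ε * (Fintype.card I * ε / (1 - δ) ^ 2)
        = Fintype.card I * ε ^ 2 / (1 - δ) ^ 2 := by ring
      rw [h3]; linarith
    have hval : (1 / η) * (∑ s, ν s * ∑ x, (π' k s x - π k s x) ^ 2)
        - Fintype.card I * ε ^ 2 / (1 - δ) ^ 3
        ≤ ∑ s, ν s * V k τ s - ∑ s, ν s * V k σ s := by
      have h1 : (1 - δ) * ((1 / η) * (∑ s, ν s * ∑ x, (π' k s x - π k s x) ^ 2))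
          ≤ ∑ s, d s * ((1 / η) * ∑ x, (π' k s x - π k s x) ^ 2) := by
        rw [Finset.mul_sum, Finset.mul_sum]
        refine Finset.sum_le_sum (fun s _ => ?_)
        have h0 : 0 ≤ (1 / η) * ∑ x, (π' k s x - π k s x) ^ 2 :=
          mul_nonneg (by positivity) (Finset.sum_nonneg (fun _ _ => sq_nonneg _))
        have := mul_le_mul_of_nonneg_right (hdge s) h0
        calc _ = (1 - δ) * ν s * (1 / η * ∑ x, (π' k s x - π k s x) ^ 2) := by ring
          _ ≤ _ := this
      have h2 : ∑ s, d s * ((1 / η) * ∑ x, (π' k s x - π k s x) ^ 2)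
          - Fintype.card I * ε ^ 2 / (1 - δ) ^ 2
          ≤ (1 - δ) * (∑ s, ν s * V k τ s - ∑ s, ν s * V k σ s) := by
        rw [← hpd]
        calc _ = ∑ s, d s * ((1 / η) * ∑ x, (π' k s x - π k s x) ^ 2
                - Fintype.card I * ε ^ 2 / (1 - δ) ^ 2) := by
              simp only [mul_sub, Finset.sum_sub_distrib]
              rw [← Finset.sum_mul, hd.2, one_mul]
          _ ≤ _ := Finset.sum_le_sum (fun s _ => mul_le_mul_of_nonneg_left (hinner s) (hd.1 s))
      have h3 : Fintype.card I * ε ^ 2 / (1 - δ) ^ 2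
          = (1 - δ) * (Fintype.card I * ε ^ 2 / (1 - δ) ^ 3) := by
        field_simp
      rw [h3] at h2
      refine le_of_mul_le_mul_left ?_ hγ
      rw [mul_sub]
      linarith
    have hphi : ∑ s, ν s * V k τ s - ∑ s, ν s * V k σ s - α
        ≤ ∑ s, ν s * Φ τ s - ∑ s, ν s * Φ σ s := by
      have : ∑ s, ν s * (V k τ s - V k σ s - α) ≤ ∑ s, ν s * (Φ τ s - Φ σ s) := by
        refine Finset.sum_le_sum (fun s _ => mul_le_mul_of_nonneg_left ?_ (hν.1 s))
        have := (abs_le.1 (hpot s k σ hσ (π' k) (hπ' k))).1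
        linarith
      simp only [mul_sub, Finset.sum_sub_distrib] at this
      rw [← Finset.sum_mul (a := α), hν.2, one_mul] at this
      exact this
    linarith

lemma final_num (g N Ab κ X T η R : ℝ) (hg : 0 < g) (hN : 0 < N) (hA : 0 < Ab) (hκ : 0 < κ)
    (hX : 0 < X) (hT : 0 < T)
    (hη : η = g ^ ((5:ℝ)/2) * Real.sqrt X / (2 * N * Ab * Real.sqrt T))
    (hR : R ^ 2 ≤ 9 / (η ^ 2 * g ^ 2) * (κ * (η * (5 / 4 * X)) / T)) :
    R ≤ 6 * Real.sqrt 2 * Real.sqrt (κ * Ab * N) * g ^ (-(9:ℝ)/4) * (X / T) ^ ((1:ℝ)/4) := by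
  have hη0 : 0 < η := by rw [hη]; positivity
  refine (abs_le_of_sq_le_sq' (hR.trans ?_) (by positivity)).2
  have e1 : (g ^ (-(9:ℝ)/4)) ^ 2 = g ^ (-(9:ℝ)/2) := by
    rw [← Real.rpow_natCast, ← Real.rpow_mul hg.le]; norm_num
  have e2 : ((X / T) ^ ((1:ℝ)/4)) ^ 2 = Real.sqrt X / Real.sqrt T := by
    rw [← Real.rpow_natCast, ← Real.rpow_mul (by positivity), ← Real.sqrt_div hX.le,
      Real.sqrt_eq_rpow]; norm_num
  have e3 : g ^ ((5:ℝ)/2) * g ^ 2 * g ^ (-(9:ℝ)/2) = 1 := by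
    rw [← Real.rpow_natCast, ← Real.rpow_add hg, ← Real.rpow_add hg]; norm_num
  simp only [mul_pow]
  rw [e1, e2, Real.sq_sqrt (by norm_num), Real.sq_sqrt (by positivity)]
  set h := g ^ (-(9:ℝ)/2) with hh
  have hhp : 0 < h := by positivity
  have e4 : g ^ ((5:ℝ)/2) * g ^ 2 = 1 / h := by field_simp; exact e3
  set x := Real.sqrt X
  set y := Real.sqrt T
  have hx : 0 < x := Real.sqrt_pos.2 hX
  have hy : 0 < y := Real.sqrt_pos.2 hT
  have hxX : X = x ^ 2 := (Real.sq_sqrt hX.le).symm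
  have hyT : T = y ^ 2 := (Real.sq_sqrt hT.le).symm
  have e5 : η * g ^ 2 = x / (h * (2 * N * Ab * y)) := by
    rw [hη]
    calc _ = (g ^ ((5:ℝ)/2) * g ^ 2) * x / (2 * N * Ab * y) := by ring
      _ = _ := by rw [e4]; field_simp
  have e6 : 9 / (η ^ 2 * g ^ 2) * (κ * (η * (5 / 4 * X)) / T)
      = 9 * κ * (5 / 4) * X / T / (η * g ^ 2) := by
    field_simp
  rw [e6, e5, hxX, hyT]
  have e7 : 9 * κ * (5 / 4) * x ^ 2 / y ^ 2 / (x / (h * (2 * N * Ab * y)))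
      = 45 / 2 * (κ * Ab * N * h * (x / y)) := by
    field_simp
    ring
  rw [e7]
  have : 0 < κ * Ab * N * h * (x / y) := by positivity
  nlinarith

lemma jensen_sq [Fintype S] (d n : S → ℝ) (hd : IsProbVec d) :
    (∑ s, d s * n s) ^ 2 ≤ ∑ s, d s * n s ^ 2 := by
  obtain ⟨m, hm⟩ : ∃ m, m = ∑ s, d s * n s := ⟨_, rfl⟩
  rw [← hm]
  have h : 0 ≤ ∑ s, d s * (n s - m) ^ 2 :=
    Finset.sum_nonneg (fun s _ => mul_nonneg (hd.1 s) (sq_nonneg _))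
  have e : ∑ s, d s * (n s - m) ^ 2 = ∑ s, d s * n s ^ 2 - 2 * m * ∑ s, d s * n s
      + m ^ 2 * ∑ s, d s := by
    rw [Finset.mul_sum, Finset.mul_sum, ← Finset.sum_sub_distrib, ← Finset.sum_add_distrib]
    exact Finset.sum_congr rfl (fun _ _ => by ring)
  rw [e, hd.2, ← hm] at h
  nlinarith

end Helpers


/-- **Theorem 1.** Nash-regret bound for projected gradient ascent in Markov `α`-potential
games.  The Nash-regret `(1/T)·∑_{t=1}^T max_i sup_{π_i'} (V_i(μ,(π_i',π_{-i}^{(t)})) − V_i(μ,π^{(t)}))`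
is bounded by the stated quantity; equivalently (as formalized here), the bound holds for every
selection of a player `isel t` and a deviation policy `devsel t` at each step `t`. -/
theorem projected_gradient_ascent_nash_regret
    {S I : Type*} [Fintype S] [Nonempty S] [DecidableEq S]
    [Fintype I] [Nonempty I] [DecidableEq I]
    {A : I → Type*} [∀ i, Fintype (A i)] [∀ i, Nonempty (A i)] [∀ i, DecidableEq (A i)]
    (δ : ℝ) (hδ : 0 < δ) (hδ1 : δ < 1)
    (P : S → (∀ i, A i) → S → ℝ) (hP : IsKernel P)
    (u : I → S → (∀ i, A i) → ℝ) (hu : ∀ i s a, u i s a ∈ Set.Icc (0:ℝ) 1)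
    (Abar : ℕ) (hAbar : Abar = Finset.univ.sup' Finset.univ_nonempty
      (fun i : I => Fintype.card (A i)))
    (α : ℝ) (hα : 0 ≤ α)
    (V : I → (∀ j, S → A j → ℝ) → S → ℝ)
    (hV : ∀ i π, IsPolicy π → IsValueFun δ P (u i) π (V i π))
    (Φ : (∀ j, S → A j → ℝ) → S → ℝ)
    (hpot : ∀ (s : S) (i : I) (π : ∀ j, S → A j → ℝ), IsPolicy π →
      ∀ (πi' : S → A i → ℝ), (∀ s', IsProbVec (πi' s')) →
        |(Φ (Function.update π i πi') s - Φ π s) -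
          (V i (Function.update π i πi') s - V i π s)| ≤ α)
    (CΦ : ℝ) (hCΦpos : 0 < CΦ)
    (hCΦ : ∀ (μ' : S → ℝ), IsProbVec μ' → ∀ π π', IsPolicy π → IsPolicy π' →
      |(∑ s, μ' s * Φ π s) - (∑ s, μ' s * Φ π' s)| ≤ CΦ)
    (μ : S → ℝ) (hμ : IsProbVec μ)
    -- distribution mismatch coefficient
    (ν : S → ℝ) (hν : IsProbVec ν) (κt : ℝ) (hκt : 1 ≤ κt)
    (hmismatch : ∀ π, IsPolicy π → ∀ s, dvisit δ P π μ s ≤ κt * ν s)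
    (T : ℕ) (hT : 1 ≤ T)
    -- the step size
    (η : ℝ)
    (hη : η = (1 - δ) ^ ((5:ℝ)/2) * Real.sqrt (CΦ + (Fintype.card I : ℝ) ^ 2 * α * T) /
      (2 * (Fintype.card I) * Abar * Real.sqrt T))
    (hηsmall : η ≤ (1 - δ) / Real.sqrt Abar)
    -- the projected gradient-ascent iterates
    (πseq : ℕ → ∀ j, S → A j → ℝ)
    (hinit : ∀ (i : I) (s : S) (ai : A i), πseq 0 i s ai = 1 / (Fintype.card (A i)))
    (hstep : ∀ (t : ℕ) (i : I) (s : S),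
      IsProjSimplex
        (fun ai => πseq t i s ai + η * Qfun δ P (u i) (πseq t) (V i (πseq t)) i s ai)
        (πseq (t + 1) i s)) :
    -- conclusion: the Nash-regret bound
    ∀ (isel : ℕ → I) (devsel : ∀ t : ℕ, S → A (isel t) → ℝ),
      (∀ t s, IsProbVec (devsel t s)) →
      (1 / (T : ℝ)) * ∑ t ∈ Finset.Icc 1 T,
          ((∑ s, μ s * V (isel t) (Function.update (πseq t) (isel t) (devsel t)) s) -
            (∑ s, μ s * V (isel t) (πseq t) s)) ≤
        6 * Real.sqrt 2 * Real.sqrt (κt * Abar * (Fintype.card I)) *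
          (1 - δ) ^ (-(9:ℝ)/4) * (CΦ / T + (Fintype.card I : ℝ) ^ 2 * α) ^ ((1:ℝ)/4) := by
  intro isel devsel hdev
  have hγ : 0 < 1 - δ := by linarith
  have hNpos : 0 < Fintype.card I := Fintype.card_pos
  have hN : (1:ℝ) ≤ (Fintype.card I : ℝ) := by exact_mod_cast hNpos
  have hcard : ∀ i, (Fintype.card (A i) : ℝ) ≤ (Abar : ℝ) := by
    intro i
    rw [hAbar]
    exact_mod_cast Finset.le_sup' (fun i : I => Fintype.card (A i)) (Finset.mem_univ i)
  have hA : (1:ℝ) ≤ (Abar : ℝ) := by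
    have i : I := Classical.arbitrary I
    refine le_trans ?_ (hcard i)
    exact_mod_cast (Fintype.card_pos : 0 < Fintype.card (A i))
  have hT1 : (1:ℝ) ≤ (T : ℝ) := by exact_mod_cast hT
  set N : ℝ := (Fintype.card I : ℝ) with hNd
  set Ab : ℝ := (Abar : ℝ) with hAbd
  set Tr : ℝ := (T : ℝ) with hTd
  set X : ℝ := CΦ + N ^ 2 * α * Tr with hXd
  have hX : 0 < X := by positivity
  have hη0 : 0 < η := by rw [hη]; positivity
  have hpol : ∀ t, 1 ≤ t → IsPolicy (πseq t) := by
    intro t ht i s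
    obtain ⟨t, rfl⟩ := Nat.exists_eq_add_of_le' ht
    exact (hstep t i s).1
  set ε := η * Ab / (1 - δ) with hε
  have hε0 : 0 ≤ ε := by positivity
  have hfacts := fun t (ht : 1 ≤ t) i s => step_facts (πseq t i s) (πseq (t+1) i s)
    (Qfun δ P (u i) (πseq t) (V i (πseq t)) i s) η (1 - δ) Ab hη0 hγ (hcard i) (by linarith)
    hηsmall (Q_bound δ hδ hδ1 P hP (u i) (hu i) _ (hpol t ht) _ (hV i _ (hpol t ht)) i s)
    (hpol t ht i s) (hstep t i s)
  -- squared movement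
  set Y : ℕ → I → ℝ := fun t k => ∑ s, ν s * ∑ x, (πseq (t+1) k s x - πseq t k s x) ^ 2 with hY
  have hY0 : ∀ t k, 0 ≤ Y t k := fun t k => Finset.sum_nonneg (fun s _ =>
    mul_nonneg (hν.1 s) (Finset.sum_nonneg (fun _ _ => sq_nonneg _)))
  have hpotstep : ∀ t, 1 ≤ t → (1 / η) * ∑ k, Y t k - N * (α + N * ε ^ 2 / (1 - δ) ^ 3)
      ≤ ∑ s, ν s * Φ (πseq (t+1)) s - ∑ s, ν s * Φ (πseq t) s := by
    intro t ht
    have := pot_step δ hδ hδ1 P hP u hu α V hV Φ hpot ν hν η hη0 ε hε0 (πseq t) (πseq (t+1))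
      (hpol t ht) (hpol (t+1) (by omega)) (fun k s => (hfacts t ht k s).1)
      (fun k s => (hfacts t ht k s).2.1) Finset.univ
    rw [Finset.piecewise_univ, Finset.sum_sub_distrib, ← Finset.mul_sum, Finset.sum_const,
      Finset.card_univ, nsmul_eq_mul] at this
    exact this
  have hsumpot : ∀ n : ℕ, ∑ t ∈ Finset.Icc 1 n, ((1 / η) * ∑ k, Y t k
      - N * (α + N * ε ^ 2 / (1 - δ) ^ 3))
      ≤ ∑ s, ν s * Φ (πseq (n+1)) s - ∑ s, ν s * Φ (πseq 1) s := by
    intro n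
    induction n with
    | zero => simp
    | succ n ih =>
      rw [Finset.sum_Icc_succ_top (by omega)]
      have := hpotstep (n+1) (by omega)
      linarith
  have hYsum : ∑ t ∈ Finset.Icc 1 T, ∑ k, Y t k ≤ η * (5 / 4 * X) := by
    have h1 := hsumpot T
    have h2 := (abs_le.1 (hCΦ ν hν _ _ (hpol (T+1) (by omega)) (hpol 1 le_rfl))).2
    rw [Finset.sum_sub_distrib, ← Finset.mul_sum] at h1
    simp only [Finset.sum_const, Nat.card_Icc, Nat.add_sub_cancel, nsmul_eq_mul] at h1
    have h3 : Tr * (N * (N * ε ^ 2 / (1 - δ) ^ 3)) = X / 4 := by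
      have hg5 : ((1 - δ) ^ ((5:ℝ)/2)) ^ 2 = (1 - δ) ^ 5 := by
        rw [← Real.rpow_natCast, ← Real.rpow_mul hγ.le, ← Real.rpow_natCast]; norm_num
      have hη2 : η ^ 2 = (1 - δ) ^ 5 * X / (4 * N ^ 2 * Ab ^ 2 * Tr) := by
        rw [hη, div_pow, mul_pow, hg5, Real.sq_sqrt hX.le]
        simp only [mul_pow]
        rw [Real.sq_sqrt (by linarith)]
        norm_num
      rw [hε, div_pow, mul_pow, hη2]
      field_simp
    have h4 : Tr * (N * α) ≤ N ^ 2 * α * Tr := by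
      have : N * (α * Tr) ≤ N * (N * (α * Tr)) := by
        refine mul_le_mul_of_nonneg_left ?_ (by linarith)
        exact le_mul_of_one_le_left (by positivity) hN
      nlinarith
    have h5 : (1 / η) * ∑ t ∈ Finset.Icc 1 T, ∑ k, Y t k ≤ 5 / 4 * X := by
      rw [mul_add, mul_add] at h1
      linarith
    rw [div_mul_eq_mul_div, one_mul, div_le_iff₀ hη0] at h5
    linarith
  -- per-step gap
  set G : ℕ → ℝ := fun t =>
    (∑ s, μ s * V (isel t) (Function.update (πseq t) (isel t) (devsel t)) s) -
            (∑ s, μ s * V (isel t) (πseq t) s) with hG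
  have hgap : ∀ t, 1 ≤ t → ∃ m : ℝ, 0 ≤ m ∧ m ^ 2 ≤ κt * ∑ k, Y t k ∧
      G t ≤ 3 / (η * (1 - δ)) * m := by
    intro t ht
    have hp := hpol t ht
    set i := isel t with hi
    have hσ := policy_update _ hp i (devsel t) (hdev t)
    have hpd := perf_diff δ hδ hδ1 P hP (u i) _ hp i (devsel t) (hdev t) _ _ (hV i _ hp)
      (hV i _ hσ) μ hμ
    have hd := dvisit_prob δ hδ hδ1 P hP _ hσ μ hμ
    have hmm := hmismatch _ hσ
    set d := dvisit δ P (Function.update (πseq t) i (devsel t)) μ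
    set n : S → ℝ := fun s => Real.sqrt (∑ x, (πseq (t+1) i s x - πseq t i s x) ^ 2) with hn
    have hnsq : ∀ s, n s ^ 2 = ∑ x, (πseq (t+1) i s x - πseq t i s x) ^ 2 := fun s =>
      Real.sq_sqrt (Finset.sum_nonneg (fun _ _ => sq_nonneg _))
    refine ⟨∑ s, d s * n s, Finset.sum_nonneg (fun s _ => mul_nonneg (hd.1 s) (Real.sqrt_nonneg _)),
      ?_, ?_⟩
    · calc _ ≤ ∑ s, d s * n s ^ 2 := jensen_sq d n hd
        _ ≤ ∑ s, (κt * ν s) * n s ^ 2 :=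
            Finset.sum_le_sum (fun s _ => mul_le_mul_of_nonneg_right (hmm s) (sq_nonneg _))
        _ = κt * Y t i := by
            rw [hY, Finset.mul_sum]
            exact Finset.sum_congr rfl (fun s _ => by rw [hnsq]; ring)
        _ ≤ κt * ∑ k, Y t k := by
            refine mul_le_mul_of_nonneg_left ?_ (by linarith)
            exact Finset.single_le_sum (fun k _ => hY0 t k) (Finset.mem_univ i)
    · have h1 : (1 - δ) * G t ≤ ∑ s, d s * (3 / η * n s) := by
        rw [hG]
        refine hpd.symm.le.trans ?_
        exact Finset.sum_le_sum (fun s _ => mul_le_mul_of_nonneg_left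
          ((hfacts t ht i s).2.2 _ (hdev t s)) (hd.1 s))
      have h2 : ∑ s, d s * (3 / η * n s) = (1 - δ) * (3 / (η * (1 - δ)) * ∑ s, d s * n s) := by
        rw [Finset.mul_sum, Finset.mul_sum]
        refine Finset.sum_congr rfl (fun s _ => ?_)
        field_simp
      rw [h2] at h1
      exact le_of_mul_le_mul_left h1 hγ
  choose! m hm0 hm2 hmG using hgap
  set Mm := ∑ t ∈ Finset.Icc 1 T, m t with hMm
  have hGsum : ∑ t ∈ Finset.Icc 1 T, G t ≤ 3 / (η * (1 - δ)) * Mm := by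
    rw [hMm, Finset.mul_sum]
    exact Finset.sum_le_sum (fun t ht => hmG t (Finset.mem_Icc.1 ht).1)
  have hM2 : Mm ^ 2 ≤ Tr * (κt * (η * (5 / 4 * X))) := by
    have h1 := sq_sum_le_card_mul_sum_sq (s := Finset.Icc 1 T) (f := m)
    simp only [Nat.card_Icc, Nat.add_sub_cancel] at h1
    refine h1.trans (mul_le_mul_of_nonneg_left ?_ (by linarith))
    calc _ ≤ ∑ t ∈ Finset.Icc 1 T, κt * ∑ k, Y t k :=
          Finset.sum_le_sum (fun t ht => hm2 t (Finset.mem_Icc.1 ht).1)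
      _ = κt * ∑ t ∈ Finset.Icc 1 T, ∑ k, Y t k := by rw [Finset.mul_sum]
      _ ≤ _ := mul_le_mul_of_nonneg_left hYsum (by linarith)
  have hXT : CΦ / Tr + N ^ 2 * α = X / Tr := by
    rw [hXd]; field_simp
  rw [hXT]
  have hfin := final_num (1 - δ) N Ab κt X Tr η (1 / Tr * (3 / (η * (1 - δ)) * Mm)) hγ
    (by linarith) (by linarith) (by linarith) hX (by linarith) hη (by
      calc (1 / Tr * (3 / (η * (1 - δ)) * Mm)) ^ 2
          = (1 / Tr) ^ 2 * (9 / (η ^ 2 * (1 - δ) ^ 2)) * Mm ^ 2 := by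
            field_simp; ring
        _ ≤ (1 / Tr) ^ 2 * (9 / (η ^ 2 * (1 - δ) ^ 2)) * (Tr * (κt * (η * (5 / 4 * X)))) :=
            mul_le_mul_of_nonneg_left hM2 (by positivity)
        _ = _ := by field_simp)
  refine le_trans ?_ hfin
  exact mul_le_mul_of_nonneg_left hGsum (by positivity)
end

section
/- (Theorem 2: Nash-regret bound for sequential maximum improvement smoothed best response in Markov α-potential games.) Consider a finite Markov game that is a Markov α-potential game with α-potential function Φ. Write Ā = max_{i∈I}|A_i| and C = max_{i,s,a}|u_i(s,a)|, and assume Ā ≥ 2, C ≥ 1, and 8·C·√Ā/(√μ̄·(1−δ)²) ≥ 1, where μ is an initial distribution with μ̄ = min_{s∈S} μ(s) > 0. Let C_Φ > 0 satisfy |Φ(μ,π) − Φ(μ,π')| ≤ C_Φ for all profiles π, π', and set C' = C_Φ + 2·|I|·log(Ā)/(1−δ). Then for every T ≥ 1 there exists τ ∈ (0,1) such that the sequential maximum improvement smoothed best response iterates π^{(0)},…,π^{(T)} with parameter τ satisfy Nash-regret(T) ≤ (16√2·C·√Ā·log Ā)/(√μ̄·(1−δ)^{5/2}) · ( (α + C'/T)^{1/2}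 + (α + C'/T)^{1/4}·(1 + (|I|/T)^{1/4}) + (|I|/T)^{1/2} ). -/
open Finset

/-- Maximum one-stage improvement of the smoothed `Q`-value, `Δ_i(s)`:
the gap between the best entropy-regularized one-stage value and the current one. -/
noncomputable def improveDelta {S I : Type*} {A : I → Type*}
    [Fintype S] [Fintype I] [DecidableEq I] [∀ i, Fintype (A i)] [∀ i, DecidableEq (A i)]
    (δ τ : ℝ) (P : S → (∀ i, A i) → S → ℝ) (u : S → (∀ i, A i) → ℝ)
    (π : ∀ j, S → A j → ℝ) (Vt : S → ℝ) (i : I) (s : S) : ℝ :=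
  (⨆ p : {p : A i → ℝ // IsProbVec p},
      ((∑ ai, p.1 ai * Qsmooth δ τ P u π Vt i s ai) - τ * negent p.1)) -
    ((∑ ai, π i s ai * Qsmooth δ τ P u π Vt i s ai) - τ * negent (π i s))

lemma aux_contr_lower {S : Type*} [Fintype S] [Nonempty S] (δ : ℝ) (hδ : 0 < δ) (hδ1 : δ < 1)
    (M : S → S → ℝ) (hM : ∀ s, IsProbVec (M s)) (f g : S → ℝ) (hg : ∀ s, 0 ≤ g s)
    (h : ∀ s, g s + δ * ∑ s', M s s' * f s' ≤ f s) : ∀ s, g s ≤ f s := by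
  obtain ⟨s0, hs0⟩ := Finite.exists_min f
  have key : ∀ s, f s0 ≤ ∑ s', M s s' * f s' := by
    intro s
    calc f s0 = ∑ s', M s s' * f s0 := by rw [← Finset.sum_mul, (hM s).2, one_mul]
      _ ≤ _ := Finset.sum_le_sum fun s' _ => mul_le_mul_of_nonneg_left (hs0 s') ((hM s).1 s')
  have h0 : 0 ≤ f s0 := by
    have h1 := h s0
    have h2 := key s0
    have h3 := hg s0
    nlinarith
  intro s
  have h1 := h s
  have h2 := key s
  nlinarith

lemma aux_contr_upper {S : Type*} [Fintype S] [Nonempty S] (δ : ℝ) (hδ : 0 < δ) (hδ1 : δ < 1)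
    (M : S → S → ℝ) (hM : ∀ s, IsProbVec (M s)) (f : S → ℝ) (c : ℝ)
    (h : ∀ s, f s ≤ c + δ * ∑ s', M s s' * f s') : ∀ s, f s ≤ c / (1 - δ) := by
  obtain ⟨s0, hs0⟩ := Finite.exists_max f
  have key : ∑ s', M s0 s' * f s' ≤ f s0 := by
    calc _ ≤ ∑ s', M s0 s' * f s0 :=
          Finset.sum_le_sum fun s' _ => mul_le_mul_of_nonneg_left (hs0 s') ((hM s0).1 s')
      _ = f s0 := by rw [← Finset.sum_mul, (hM s0).2, one_mul]
  intro s
  refine (hs0 s).trans ?_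
  rw [le_div_iff₀ (by linarith)]
  have h1 := h s0
  nlinarith

lemma aux_gibbs {α : Type*} [Fintype α] [Nonempty α] (τ : ℝ) (hτ : 0 < τ) (q p : α → ℝ)
    (hp : IsProbVec p) :
    (∑ a, p a * q a) - τ * negent p ≤ τ * Real.log (∑ a, Real.exp (q a / τ)) := by
  set Z := ∑ a, Real.exp (q a / τ) with hZ
  have hZpos : 0 < Z := Finset.sum_pos (fun a _ => Real.exp_pos _) Finset.univ_nonempty
  have h1 : ∀ a, p a * (q a / τ) - p a * Real.log (p a) - p a * Real.log Z
      ≤ Real.exp (q a / τ) / Z - p a := by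
    intro a
    rcases (hp.1 a).eq_or_lt with h | h
    · rw [← h]; simp; positivity
    · have h2 := Real.log_le_sub_one_of_pos (x := Real.exp (q a / τ) / Z / p a) (by positivity)
      rw [Real.log_div (by positivity) h.ne', Real.log_div (by positivity) hZpos.ne',
        Real.log_exp] at h2
      have h3 := mul_le_mul_of_nonneg_left h2 h.le
      have h4 : p a * (Real.exp (q a / τ) / Z / p a - 1) = Real.exp (q a / τ) / Z - p a := by
        field_simp
      rw [h4] at h3
      linarith
  have h2 := Finset.sum_le_sum fun a (_ : a ∈ Finset.univ) => h1 a
  simp only [Finset.sum_sub_distrib] at h2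
  rw [← Finset.sum_div, ← hZ, div_self hZpos.ne', hp.2, ← Finset.sum_mul, hp.2] at h2
  have h5 : ∑ a, p a * (q a / τ) = (∑ a, p a * q a) / τ := by
    rw [Finset.sum_div]; exact Finset.sum_congr rfl fun a _ => by ring
  rw [h5] at h2
  unfold negent
  have h6 : (∑ a, p a * q a) / τ ≤ (∑ a, p a * Real.log (p a)) + Real.log Z := by linarith
  rw [div_le_iff₀ hτ] at h6
  linarith

lemma aux_softmax_prob {α : Type*} [Fintype α] [Nonempty α] (τ : ℝ) (q : α → ℝ) :
    IsProbVec (softmax τ q) := by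
  have hZpos : 0 < ∑ a, Real.exp (q a / τ) :=
    Finset.sum_pos (fun a _ => Real.exp_pos _) Finset.univ_nonempty
  refine ⟨fun a => by unfold softmax; positivity, ?_⟩
  unfold softmax
  rw [← Finset.sum_div, div_self hZpos.ne']

lemma aux_softmax_eq {α : Type*} [Fintype α] [Nonempty α] (τ : ℝ) (hτ : 0 < τ) (q : α → ℝ) :
    (∑ a, softmax τ q a * q a) - τ * negent (softmax τ q)
      = τ * Real.log (∑ a, Real.exp (q a / τ)) := by
  have hZpos : 0 < ∑ a, Real.exp (q a / τ) :=
    Finset.sum_pos (fun a _ => Real.exp_pos _) Finset.univ_nonempty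
  have hl : ∀ a, Real.log (softmax τ q a) = q a / τ - Real.log (∑ a, Real.exp (q a / τ)) := by
    intro a
    unfold softmax
    rw [Real.log_div (by positivity) hZpos.ne', Real.log_exp]
  unfold negent
  simp only [hl]
  rw [Finset.mul_sum, ← Finset.sum_sub_distrib]
  have : ∀ a, softmax τ q a * q a - τ * (softmax τ q a * (q a / τ - Real.log (∑ a, Real.exp (q a / τ))))
      = softmax τ q a * (τ * Real.log (∑ a, Real.exp (q a / τ))) := by
    intro a; field_simp; ring
  simp only [this]
  rw [← Finset.sum_mul, (aux_softmax_prob τ q).2, one_mul]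

lemma aux_negent_nonpos {α : Type*} [Fintype α] (p : α → ℝ) (hp : IsProbVec p) :
    negent p ≤ 0 := by
  unfold negent
  refine Finset.sum_nonpos fun a _ => ?_
  have h1 : p a ≤ 1 := by
    rw [← hp.2]; exact Finset.single_le_sum (fun b _ => hp.1 b) (Finset.mem_univ a)
  exact mul_nonpos_of_nonneg_of_nonpos (hp.1 a) (Real.log_nonpos (hp.1 a) h1)

lemma aux_negent_lower {α : Type*} [Fintype α] [Nonempty α] (p : α → ℝ) (hp : IsProbVec p) :
    - negent p ≤ Real.log (Fintype.card α) := by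
  have := aux_gibbs 1 one_pos (fun _ => 0) p hp
  simpa using this

lemma aux_iSup {α : Type*} [Fintype α] [Nonempty α] (τ : ℝ) (hτ : 0 < τ) (q : α → ℝ) :
    (⨆ p : {p : α → ℝ // IsProbVec p}, ((∑ a, p.1 a * q a) - τ * negent p.1))
      = τ * Real.log (∑ a, Real.exp (q a / τ)) := by
  haveI : Nonempty {p : α → ℝ // IsProbVec p} := ⟨⟨_, aux_softmax_prob τ q⟩⟩
  apply le_antisymm
  · exact ciSup_le fun p => aux_gibbs τ hτ q p.1 p.2
  · rw [← aux_softmax_eq τ hτ q]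
    refine le_ciSup (f := fun p : {p : α → ℝ // IsProbVec p} =>
      ((∑ a, p.1 a * q a) - τ * negent p.1)) ?_ ⟨_, aux_softmax_prob τ q⟩
    exact ⟨_, by rintro _ ⟨p, rfl⟩; exact aux_gibbs τ hτ q p.1 p.2⟩

section
variable {S I : Type*} {A : I → Type*}
    [Fintype S] [Fintype I] [DecidableEq I] [∀ i, Fintype (A i)]

lemma aux_joint_prob (π : ∀ j, S → A j → ℝ) (hπ : IsPolicy π) (s : S) :
    IsProbVec (jointDist π s) := by
  refine ⟨fun a => Finset.prod_nonneg fun i _ => (hπ i s).1 _, ?_⟩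
  unfold jointDist
  have h := Finset.prod_univ_sum (fun i => (Finset.univ : Finset (A i))) (fun i a => π i s a)
  rw [Fintype.piFinset_univ] at h
  rw [← h]
  exact Finset.prod_eq_one fun i _ => (hπ i s).2

lemma aux_trans_prob (P : S → (∀ i, A i) → S → ℝ) (hP : IsKernel P)
    (π : ∀ j, S → A j → ℝ) (hπ : IsPolicy π) (s : S) :
    IsProbVec (transMat P π s) := by
  refine ⟨fun s' => Finset.sum_nonneg fun a _ =>
    mul_nonneg ((aux_joint_prob π hπ s).1 a) ((hP s a).1 s'), ?_⟩
  unfold transMat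
  rw [Finset.sum_comm]
  simp only [← Finset.mul_sum]
  rw [← (aux_joint_prob π hπ s).2]
  exact Finset.sum_congr rfl fun a _ => by rw [(hP s a).2, mul_one]

lemma aux_update_policy (π : ∀ j, S → A j → ℝ) (hπ : IsPolicy π) (i : I) (p : S → A i → ℝ)
    (hp : ∀ s, IsProbVec (p s)) : IsPolicy (Function.update π i p) := by
  intro j s
  by_cases h : j = i
  · subst h; simpa using hp s
  · simpa [Function.update_of_ne h] using hπ j s

lemma aux_Q [∀ i, DecidableEq (A i)] (δ τ : ℝ)
    (P : S → (∀ i, A i) → S → ℝ) (u : S → (∀ i, A i) → ℝ)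
    (π : ∀ j, S → A j → ℝ) (hπ : IsPolicy π) (W : S → ℝ) (i : I) (p : S → A i → ℝ)
    (hp : ∀ s, IsProbVec (p s)) (s : S) :
    ∑ ai, p s ai * Qsmooth δ τ P u π W i s ai
      = expPay u (Function.update π i p) s - τ * negent (π i s)
        + δ * ∑ s', transMat P (Function.update π i p) s s' * W s' := by
  have hj : ∀ a : ∀ j, A j, jointDist (Function.update π i p) s a
      = p s (a i) * ∏ j ∈ Finset.univ.erase i, π j s (a j) := by
    intro a
    unfold jointDist
    rw [← Finset.mul_prod_erase _ _ (Finset.mem_univ i)]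
    congr 1
    · simp
    · exact Finset.prod_congr rfl fun j hj => by
        rw [Function.update_of_ne (Finset.ne_of_mem_erase hj)]
  have h1 := (aux_joint_prob _ (aux_update_policy π hπ i p hp) s).2
  have hL : ∑ ai, p s ai * Qsmooth δ τ P u π W i s ai
      = ∑ a : ∀ j, A j, jointDist (Function.update π i p) s a *
        (u s a - τ * negent (π i s) + δ * ∑ s', P s a s' * W s') := by
    unfold Qsmooth
    simp only [Finset.mul_sum]
    rw [Finset.sum_comm]
    refine Finset.sum_congr rfl fun a _ => ?_
    rw [hj a]
    simp only [mul_ite, mul_zero]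
    rw [Finset.sum_ite_eq]
    simp [Finset.mul_sum, mul_assoc]
  rw [hL]
  simp only [mul_add, mul_sub, Finset.sum_add_distrib, Finset.sum_sub_distrib]
  rw [← Finset.sum_mul, h1, one_mul]
  congr 1
  unfold transMat
  simp only [Finset.mul_sum, Finset.sum_mul]
  rw [Finset.sum_comm]
  exact Finset.sum_congr rfl fun a _ => Finset.sum_congr rfl fun s' _ => by ring

/-- one-step advantage -/
lemma aux_pdl [∀ i, DecidableEq (A i)] (δ τ : ℝ)
    (P : S → (∀ i, A i) → S → ℝ) (u : S → (∀ i, A i) → ℝ)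
    (π : ∀ j, S → A j → ℝ) (hπ : IsPolicy π) (W W' : S → ℝ) (i : I) (p : S → A i → ℝ)
    (hp : ∀ s, IsProbVec (p s))
    (hW : IsSmoothedValueFun δ τ P u π i W)
    (hW' : IsSmoothedValueFun δ τ P u (Function.update π i p) i W') (s : S) :
    W' s - W s = (((∑ ai, p s ai * Qsmooth δ τ P u π W i s ai) - τ * negent (p s))
        - ((∑ ai, π i s ai * Qsmooth δ τ P u π W i s ai) - τ * negent (π i s)))
      + δ * ∑ s', transMat P (Function.update π i p) s s' * (W' s' - W s') := by
  have h1 := aux_Q δ τ P u π hπ W i p hp s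
  have h2 := aux_Q δ τ P u π hπ W i (π i) (hπ i) s
  rw [Function.update_eq_self] at h2
  have h3 := hW s
  have h4 := hW' s
  rw [Function.update_self] at h4
  simp only [mul_sub, Finset.sum_sub_distrib]
  rw [h1, h2]
  linarith

lemma aux_smooth_cmp [Nonempty S] (δ τ : ℝ) (hδ : 0 < δ) (hδ1 : δ < 1) (hτ : 0 < τ)
    (P : S → (∀ i, A i) → S → ℝ) (hP : IsKernel P) (u : S → (∀ i, A i) → ℝ)
    (π : ∀ j, S → A j → ℝ) (hπ : IsPolicy π) (V W : S → ℝ) (i : I) [Nonempty (A i)]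
    (hV : IsValueFun δ P u π V)
    (hW : IsSmoothedValueFun δ τ P u π i W) (L : ℝ)
    (hL : Real.log (Fintype.card (A i)) ≤ L) (s : S) :
    V s ≤ W s ∧ W s ≤ V s + τ * L / (1 - δ) := by
  have hM := aux_trans_prob P hP π hπ
  have hrec : ∀ s, W s - V s = - τ * negent (π i s)
      + δ * ∑ s', transMat P π s s' * (W s' - V s') := by
    intro s
    have h3 := hW s
    have h4 := hV s
    simp only [mul_sub, Finset.sum_sub_distrib]
    linarith
  have ha := aux_contr_lower δ hδ hδ1 _ hM (fun s => W s - V s) (fun _ => 0) (fun _ => le_rfl)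
    (fun s => by
      have := hrec s
      have h2 := aux_negent_nonpos _ (hπ i s)
      beta_reduce
      nlinarith) s
  have hb := aux_contr_upper δ hδ hδ1 _ hM (fun s => W s - V s) (τ * L)
    (fun s => by
      have := hrec s
      have h2 := aux_negent_lower _ (hπ i s)
      beta_reduce
      nlinarith) s
  beta_reduce at ha hb
  constructor <;> linarith

lemma aux_V_bound [Nonempty S] (δ : ℝ) (hδ : 0 < δ) (hδ1 : δ < 1)
    (P : S → (∀ i, A i) → S → ℝ) (hP : IsKernel P) (u : S → (∀ i, A i) → ℝ) (C : ℝ)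
    (hC : ∀ s a, |u s a| ≤ C)
    (π : ∀ j, S → A j → ℝ) (hπ : IsPolicy π) (V : S → ℝ)
    (hV : IsValueFun δ P u π V) (s : S) :
    |V s| ≤ C / (1 - δ) := by
  have hM := aux_trans_prob P hP π hπ
  have hu : ∀ s, |expPay u π s| ≤ C := by
    intro s
    have hj := aux_joint_prob π hπ s
    unfold expPay
    calc _ ≤ ∑ a, |jointDist π s a * u s a| := Finset.abs_sum_le_sum_abs _ _
      _ ≤ ∑ a, jointDist π s a * C := Finset.sum_le_sum fun a _ => by
          rw [abs_mul, abs_of_nonneg (hj.1 a)]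
          exact mul_le_mul_of_nonneg_left (hC s a) (hj.1 a)
      _ = C := by rw [← Finset.sum_mul, hj.2, one_mul]
  have h1 := aux_contr_upper δ hδ hδ1 _ hM V C (fun s => by
    have := hV s
    have := (abs_le.1 (hu s)).2
    linarith) s
  have h2 := aux_contr_upper δ hδ hδ1 _ hM (fun s => - V s) C (fun s => by
    have := hV s
    have := (abs_le.1 (hu s)).1
    simp only [mul_neg, Finset.sum_neg_distrib]
    linarith) s
  rw [abs_le]
  constructor <;> linarith
end

lemma aux_final (δ : ℝ) (hδ : 0 < δ) (hδ1 : δ < 1) (C A L m X R I4 J : ℝ) (hC : 1 ≤ C)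
    (hA : 2 ≤ A) (hL : L = Real.log A) (hm : 0 < m) (hm1 : m ≤ 1) (hX : 0 ≤ X)
    (hR1 : R ≤ 2 * C / (1 - δ)) (hR2 : R ≤ 2 * X / ((1 - δ) * m)) (hI : 0 ≤ I4) (hJ : 0 ≤ J) :
    R ≤ (16 * Real.sqrt 2 * C * Real.sqrt A * L) / (Real.sqrt m * (1 - δ) ^ ((5:ℝ)/2)) *
      (Real.sqrt X + X ^ ((1:ℝ)/4) * (1 + I4) + J) := by
  have hd : 0 < 1 - δ := by linarith
  have hL2 : 1 / 2 ≤ L := by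
    rw [hL]
    have h1 := Real.log_two_gt_d9
    have h2 := Real.log_le_log (by norm_num) hA
    linarith
  have hs2 : 1 ≤ Real.sqrt 2 := Real.one_le_sqrt.2 (by norm_num)
  have hsA : 1 ≤ Real.sqrt A := Real.one_le_sqrt.2 (by linarith)
  have hsm : 0 < Real.sqrt m := Real.sqrt_pos.2 hm
  have hpow : (1 - δ) ^ ((5:ℝ)/2) ≤ 1 - δ := by
    have := Real.rpow_le_rpow_of_exponent_ge hd (by linarith) (show (1:ℝ) ≤ 5/2 by norm_num)
    simpa using this
  have hpp : 0 < (1 - δ) ^ ((5:ℝ)/2) := Real.rpow_pos_of_pos hd _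
  have hK : 2 * C / (Real.sqrt m * (1 - δ)) ≤ (16 * Real.sqrt 2 * C * Real.sqrt A * L) /
      (Real.sqrt m * (1 - δ) ^ ((5:ℝ)/2)) := by
    apply div_le_div₀ (by positivity) _ (by positivity)
      (mul_le_mul_of_nonneg_left hpow hsm.le)
    have : 1 ≤ Real.sqrt 2 * Real.sqrt A := by nlinarith
    have h2 : 1 / 2 ≤ Real.sqrt 2 * Real.sqrt A * L := by nlinarith
    nlinarith
  have hY : Real.sqrt X ≤ Real.sqrt X + X ^ ((1:ℝ)/4) * (1 + I4) + J := by
    have : 0 ≤ X ^ ((1:ℝ)/4) * (1 + I4) := by positivity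
    linarith
  have hmain : R ≤ 2 * C / (Real.sqrt m * (1 - δ)) * Real.sqrt X := by
    have e : 2 * C / (Real.sqrt m * (1 - δ)) * Real.sqrt X
      = 2 * C / (1 - δ) * (Real.sqrt X / Real.sqrt m) := by field_simp
    rw [e]
    have hq : 0 ≤ Real.sqrt X / Real.sqrt m := by positivity
    have hcd : 0 ≤ 2 * C / (1 - δ) := by positivity
    rcases le_total 1 (Real.sqrt X / Real.sqrt m) with h | h
    · nlinarith
    · have h3 : 2 * X / ((1 - δ) * m) = 2 / (1 - δ) * (Real.sqrt X / Real.sqrt m) ^ 2 := by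
        rw [div_pow, Real.sq_sqrt hX, Real.sq_sqrt hm.le]; field_simp
      rw [h3] at hR2
      refine hR2.trans ?_
      have h4 : 2 / (1 - δ) ≤ 2 * C / (1 - δ) := by
        apply div_le_div_of_nonneg_right _ hd.le; linarith
      have h5 : (Real.sqrt X / Real.sqrt m) ^ 2 ≤ Real.sqrt X / Real.sqrt m := by nlinarith
      exact mul_le_mul h4 h5 (by positivity) hcd
  refine hmain.trans (mul_le_mul hK hY (Real.sqrt_nonneg _) ?_)
  positivity

/-- **Theorem 2.** Nash-regret bound for the sequential maximum improvement smoothed best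
response dynamics in Markov `α`-potential games.  As in Theorem 1, the Nash-regret
`(1/T)·∑_{t=1}^T max_i sup_{π_i'} (V_i(μ,(π_i',π_{-i}^{(t)})) − V_i(μ,π^{(t)}))` is bounded by
the stated quantity; equivalently (as formalized here), the bound holds for every selection of
a player `isel t` and a deviation policy `devsel t` at each step `t`. -/
theorem sequential_max_improvement_smoothed_br_nash_regret
    {S I : Type*} [Fintype S] [Nonempty S] [DecidableEq S]
    [Fintype I] [Nonempty I] [DecidableEq I]
    {A : I → Type*} [∀ i, Fintype (A i)] [∀ i, Nonempty (A i)] [∀ i, DecidableEq (A i)]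
    (δ : ℝ) (hδ : 0 < δ) (hδ1 : δ < 1)
    (P : S → (∀ i, A i) → S → ℝ) (hP : IsKernel P)
    (u : I → S → (∀ i, A i) → ℝ)
    (α : ℝ) (hα : 0 ≤ α)
    (V : I → (∀ j, S → A j → ℝ) → S → ℝ)
    (hV : ∀ i π, IsPolicy π → IsValueFun δ P (u i) π (V i π))
    (Φ : (∀ j, S → A j → ℝ) → S → ℝ)
    (hpot : ∀ (s : S) (i : I) (π : ∀ j, S → A j → ℝ), IsPolicy π →
      ∀ (πi' : S → A i → ℝ), (∀ s', IsProbVec (πi' s')) →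
        |(Φ (Function.update π i πi') s - Φ π s) -
          (V i (Function.update π i πi') s - V i π s)| ≤ α)
    (Abar : ℕ) (hAbar : Abar = Finset.univ.sup' Finset.univ_nonempty
      (fun i : I => Fintype.card (A i)))
    (hAbar2 : 2 ≤ Abar)
    (C : ℝ) (hC : C = Finset.univ.sup' Finset.univ_nonempty
      (fun x : I × S × (∀ j, A j) => |u x.1 x.2.1 x.2.2|))
    (hC1 : 1 ≤ C)
    (μ : S → ℝ) (hμ : IsProbVec μ)
    (mubar : ℝ) (hmubar : mubar = Finset.univ.inf' Finset.univ_nonempty μ)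
    (hmubar_pos : 0 < mubar)
    (hbig : 1 ≤ 8 * C * Real.sqrt Abar / (Real.sqrt mubar * (1 - δ) ^ 2))
    (CΦ : ℝ) (hCΦpos : 0 < CΦ)
    (hCΦ : ∀ π π', IsPolicy π → IsPolicy π' →
      |(∑ s, μ s * Φ π s) - (∑ s, μ s * Φ π' s)| ≤ CΦ)
    (C' : ℝ) (hC' : C' = CΦ + 2 * (Fintype.card I) * Real.log Abar / (1 - δ))
    (T : ℕ) (hT : 1 ≤ T) :
    ∃ τ : ℝ, 0 < τ ∧ τ < 1 ∧
      -- smoothed value functions for this τ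
      ∀ (Vt : (∀ j, S → A j → ℝ) → I → S → ℝ),
        (∀ π, IsPolicy π → ∀ i, IsSmoothedValueFun δ τ P (u i) π i (Vt π i)) →
      -- the sequential maximum improvement smoothed best response iterates
      ∀ (πseq : ℕ → ∀ j, S → A j → ℝ),
        (∀ (i : I) (s : S) (ai : A i), πseq 0 i s ai = 1 / (Fintype.card (A i))) →
        (∀ t : ℕ,
          ((∀ (i : I) (s : S),
              improveDelta δ τ P (u i) (πseq t) (Vt (πseq t) i) i s ≤ 0) ∧
            πseq (t + 1) = πseq t) ∨
          (¬ (∀ (i : I) (s : S),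
              improveDelta δ τ P (u i) (πseq t) (Vt (πseq t) i) i s ≤ 0) ∧
            ∃ (ib : I) (sb : S),
              (∀ (i : I) (s : S),
                improveDelta δ τ P (u i) (πseq t) (Vt (πseq t) i) i s ≤
                  improveDelta δ τ P (u ib) (πseq t) (Vt (πseq t) ib) ib sb) ∧
              (∀ ai : A ib, πseq (t + 1) ib sb ai =
                softmax τ
                  (fun ai' => Qsmooth δ τ P (u ib) (πseq t) (Vt (πseq t) ib) ib sb ai') ai) ∧
              (∀ (i : I) (s : S), ¬ (i = ib ∧ s = sb) → πseq (t + 1) i s = πseq t i s))) →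
      -- conclusion: the Nash-regret bound
      ∀ (isel : ℕ → I) (devsel : ∀ t : ℕ, S → A (isel t) → ℝ),
        (∀ t s, IsProbVec (devsel t s)) →
        (1 / (T : ℝ)) * ∑ t ∈ Finset.Icc 1 T,
            ((∑ s, μ s * V (isel t) (Function.update (πseq t) (isel t) (devsel t)) s) -
              (∑ s, μ s * V (isel t) (πseq t) s)) ≤
          (16 * Real.sqrt 2 * C * Real.sqrt Abar * Real.log Abar) /
              (Real.sqrt mubar * (1 - δ) ^ ((5:ℝ)/2)) *
            (Real.sqrt (α + C' / T) +
              (α + C' / T) ^ ((1:ℝ)/4) * (1 + ((Fintype.card I : ℝ) / T) ^ ((1:ℝ)/4)) +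
              Real.sqrt ((Fintype.card I : ℝ) / T)) := by
  have hTpos : (0:ℝ) < T := by exact_mod_cast hT
  have hT1 : (1:ℝ) ≤ T := by exact_mod_cast hT
  have hd : 0 < 1 - δ := by linarith
  set L := Real.log Abar with hL
  have hA2 : (2:ℝ) ≤ Abar := by exact_mod_cast hAbar2
  have hLpos : 0 < L := Real.log_pos (by linarith)
  have hcard : ∀ i, Real.log (Fintype.card (A i)) ≤ L := by
    intro i
    apply Real.log_le_log
    · exact_mod_cast Fintype.card_pos
    · rw [hAbar]
      exact_mod_cast Finset.le_sup' (fun i : I => Fintype.card (A i)) (Finset.mem_univ i)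
  have huC : ∀ i s a, |u i s a| ≤ C := by
    intro i s a
    rw [hC]
    exact Finset.le_sup' (fun x : I × S × (∀ j, A j) => |u x.1 x.2.1 x.2.2|)
      (Finset.mem_univ (i, s, a))
  have hmu_le : ∀ s, mubar ≤ μ s := by
    intro s; rw [hmubar]; exact Finset.inf'_le μ (Finset.mem_univ s)
  have hmu1 : mubar ≤ 1 := by
    obtain ⟨s⟩ := ‹Nonempty S›
    refine (hmu_le s).trans ?_
    rw [← hμ.2]; exact Finset.single_le_sum (fun b _ => hμ.1 b) (Finset.mem_univ s)
  have hmean : ∀ (f : S → ℝ) (c : ℝ), (∀ s, f s ≤ c) → ∑ s, μ s * f s ≤ c := by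
    intro f c h
    calc _ ≤ ∑ s, μ s * c :=
          Finset.sum_le_sum fun s _ => mul_le_mul_of_nonneg_left (h s) (hμ.1 s)
      _ = c := by rw [← Finset.sum_mul, hμ.2, one_mul]
  set τ : ℝ := 1 / (2 * T) with hτdef
  have hτ : 0 < τ := by positivity
  have hτ1 : τ < 1 := by
    rw [hτdef, div_lt_one (by positivity)]; linarith
  refine ⟨τ, hτ, hτ1, ?_⟩
  intro Vt hVt πseq h0 hstep isel devsel hdev
  have hpol : ∀ t, IsPolicy (πseq t) := by
    intro t
    induction t with
    | zero =>
      intro i s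
      have hc : (0:ℝ) < Fintype.card (A i) := by exact_mod_cast Fintype.card_pos
      refine ⟨fun a => by rw [h0]; positivity, ?_⟩
      simp only [h0]
      simp
    | succ t ih =>
      rcases hstep t with ⟨_, h⟩ | ⟨_, ib, sb, _, h1, h2⟩
      · rw [h]; exact ih
      · intro i s
        by_cases hc : i = ib ∧ s = sb
        · obtain ⟨rfl, rfl⟩ := hc
          have : πseq (t+1) i s = softmax τ
                  (fun ai' => Qsmooth δ τ P (u i) (πseq t) (Vt (πseq t) i) i s ai') :=
            funext h1
          rw [this]; exact aux_softmax_prob _ _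
        · rw [h2 i s hc]; exact ih i s
  have hle : ∀ t i s (p : A i → ℝ), IsProbVec p →
      ((∑ ai, p ai * Qsmooth δ τ P (u i) (πseq t) (Vt (πseq t) i) i s ai) - τ * negent p) -
      ((∑ ai, πseq t i s ai * Qsmooth δ τ P (u i) (πseq t) (Vt (πseq t) i) i s ai)
        - τ * negent (πseq t i s)) ≤
      improveDelta δ τ P (u i) (πseq t) (Vt (πseq t) i) i s := by
    intro t i s p hp
    unfold improveDelta
    rw [aux_iSup τ hτ]
    have := aux_gibbs τ hτ (Qsmooth δ τ P (u i) (πseq t) (Vt (πseq t) i) i s) p hp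
    linarith
  set e := τ * L / (1 - δ) with he
  have he0 : 0 < e := by positivity
  -- the improvement sequence
  have hD : ∀ t, ∃ D : ℝ, (∀ i s, improveDelta δ τ P (u i) (πseq t) (Vt (πseq t) i) i s ≤ D) ∧
      mubar * D ≤ (∑ s, μ s * Φ (πseq (t+1)) s) - (∑ s, μ s * Φ (πseq t) s) + (α + e) := by
    intro t
    rcases hstep t with ⟨h1, h2⟩ | ⟨_, ib, sb, h1, h2, h3⟩
    · refine ⟨0, h1, ?_⟩
      rw [h2]; simp; positivity
    · refine ⟨_, h1, ?_⟩
      set D := improveDelta δ τ P (u ib) (πseq t) (Vt (πseq t) ib) ib sb with hDdef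
      have hπ := hpol t
      have hπ' := hpol (t+1)
      have hup : πseq (t+1) = Function.update (πseq t) ib (πseq (t+1) ib) := by
        funext i
        by_cases hi : i = ib
        · subst hi; simp
        · rw [Function.update_of_ne hi]
          funext s
          exact h3 i s (fun h => hi h.1)
      have hsoft : πseq (t+1) ib sb = softmax τ
          (fun ai' => Qsmooth δ τ P (u ib) (πseq t) (Vt (πseq t) ib) ib sb ai') := funext h2
      have hW := hVt _ hπ ib
      have hW' := hVt _ hπ' ib
      have hpdl := aux_pdl δ τ P (u ib) (πseq t) hπ (Vt (πseq t) ib) (Vt (πseq (t+1)) ib) ib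
        (πseq (t+1) ib) (hπ' ib) hW (hup ▸ hW')
      rw [← hup] at hpdl
      have hD0 : 0 ≤ D := by
        have := hle t ib sb _ (hπ ib sb)
        linarith
      have hlow := aux_contr_lower δ hδ hδ1 _ (aux_trans_prob P hP _ hπ')
        (fun s => Vt (πseq (t+1)) ib s - Vt (πseq t) ib s)
        (fun s => if s = sb then D else 0)
        (fun s => by split_ifs <;> [exact hD0; exact le_rfl])
        (fun s => by
          have hs := hpdl s
          beta_reduce
          split_ifs with hc
          · subst hc
            have hDe : D = ((∑ ai, πseq (t+1) ib s ai *
                Qsmooth δ τ P (u ib) (πseq t) (Vt (πseq t) ib) ib s ai)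
                - τ * negent (πseq (t+1) ib s))
                - ((∑ ai, πseq t ib s ai *
                Qsmooth δ τ P (u ib) (πseq t) (Vt (πseq t) ib) ib s ai)
                - τ * negent (πseq t ib s)) := by
              rw [hDdef]
              unfold improveDelta
              rw [aux_iSup τ hτ, hsoft, aux_softmax_eq τ hτ]
            rw [hDe]
            exact hs.ge
          · rw [h3 ib s (fun h => hc h.2)] at hs
            rw [hs]; linarith)
      have hsum : mubar * D ≤ ∑ s, μ s * (Vt (πseq (t+1)) ib s - Vt (πseq t) ib s) := by
        calc mubar * D ≤ μ sb * D := mul_le_mul_of_nonneg_right (hmu_le sb) hD0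
          _ = ∑ s, μ s * (if s = sb then D else 0) := by simp
          _ ≤ _ := Finset.sum_le_sum fun s _ => mul_le_mul_of_nonneg_left (hlow s) (hμ.1 s)
      have hcmp : ∑ s, μ s * ((Vt (πseq (t+1)) ib s - Vt (πseq t) ib s)
          - (Φ (πseq (t+1)) s - Φ (πseq t) s)) ≤ α + e := by
        apply hmean
        intro s
        have a1 := (aux_smooth_cmp δ τ hδ hδ1 hτ P hP (u ib) _ hπ _ _ ib (hV ib _ hπ) hW L
          (hcard ib) s).1
        have a2 := (aux_smooth_cmp δ τ hδ hδ1 hτ P hP (u ib) _ hπ' _ _ ib (hV ib _ hπ') hW' L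
          (hcard ib) s).2
        have a3 := hpot s ib (πseq t) hπ (πseq (t+1) ib) (hπ' ib)
        rw [← hup] at a3
        have a4 := (abs_le.1 a3).1
        linarith
      simp only [mul_sub, Finset.sum_sub_distrib] at hcmp hsum
      linarith
  choose D hDle hDmu using hD
  -- regret at each step
  have hr2 : ∀ t, (∑ s, μ s * V (isel t) (Function.update (πseq t) (isel t) (devsel t)) s) -
      (∑ s, μ s * V (isel t) (πseq t) s) ≤ D t / (1 - δ) + e := by
    intro t
    rw [← Finset.sum_sub_distrib]
    simp only [← mul_sub]
    apply hmean
    have hπ := hpol t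
    have hπ' := aux_update_policy _ hπ (isel t) (devsel t) (hdev t)
    have hW := hVt _ hπ (isel t)
    have hW' := hVt _ hπ' (isel t)
    have hpdl := aux_pdl δ τ P (u (isel t)) (πseq t) hπ _ _ (isel t) (devsel t) (hdev t) hW hW'
    have hupp := aux_contr_upper δ hδ hδ1 _ (aux_trans_prob P hP _ hπ')
        (fun s => Vt (Function.update (πseq t) (isel t) (devsel t)) (isel t) s
          - Vt (πseq t) (isel t) s) (D t) (fun s => by
          have h1 := hpdl s
          have h2 := hle t (isel t) s _ (hdev t s)
          have h3 := hDle t (isel t) s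
          beta_reduce
          linarith)
    intro s
    have a1 := (aux_smooth_cmp δ τ hδ hδ1 hτ P hP (u (isel t)) _ hπ _ _ (isel t)
      (hV _ _ hπ) hW L (hcard _) s).2
    have a2 := (aux_smooth_cmp δ τ hδ hδ1 hτ P hP (u (isel t)) _ hπ' _ _ (isel t)
      (hV _ _ hπ') hW' L (hcard _) s).1
    have a3 := hupp s
    beta_reduce at a3
    linarith
  have hr1 : ∀ t, (∑ s, μ s * V (isel t) (Function.update (πseq t) (isel t) (devsel t)) s) -
      (∑ s, μ s * V (isel t) (πseq t) s) ≤ 2 * C / (1 - δ) := by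
    intro t
    rw [← Finset.sum_sub_distrib]
    simp only [← mul_sub]
    apply hmean
    have hπ := hpol t
    have hπ' := aux_update_policy _ hπ (isel t) (devsel t) (hdev t)
    intro s
    have a1 := (abs_le.1 (aux_V_bound δ hδ hδ1 P hP (u (isel t)) C (huC _) _ hπ _
      (hV _ _ hπ) s)).1
    have a2 := (abs_le.1 (aux_V_bound δ hδ hδ1 P hP (u (isel t)) C (huC _) _ hπ' _
      (hV _ _ hπ') s)).2
    have : 2 * C / (1 - δ) = C / (1 - δ) + C / (1 - δ) := by ring
    linarith
  have hDsum : mubar * ∑ t ∈ Finset.Icc 1 T, D t ≤ CΦ + T * (α + e) := by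
    have h1 : mubar * ∑ t ∈ Finset.Icc 1 T, D t ≤ ∑ t ∈ Finset.Icc 1 T,
        (((∑ s, μ s * Φ (πseq (t+1)) s) - (∑ s, μ s * Φ (πseq t) s)) + (α + e)) := by
      rw [Finset.mul_sum]
      exact Finset.sum_le_sum fun t _ => hDmu t
    have h2 : ∀ n : ℕ, ∑ t ∈ Finset.Icc 1 n,
        (((∑ s, μ s * Φ (πseq (t+1)) s) - (∑ s, μ s * Φ (πseq t) s)) + (α + e))
        = (∑ s, μ s * Φ (πseq (n+1)) s) - (∑ s, μ s * Φ (πseq 1) s) + n * (α + e) := by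
      intro n
      induction n with
      | zero => simp
      | succ n ih =>
        rw [Finset.sum_Icc_succ_top (by omega), ih]
        push_cast
        ring
    rw [h2 T] at h1
    have h3 := (abs_le.1 (hCΦ _ _ (hpol (T+1)) (hpol 1))).2
    linarith
  have hIcard : (1:ℝ) ≤ Fintype.card I := by exact_mod_cast Fintype.card_pos
  have hTe : T * e ≤ (2 * (Fintype.card I) * L / (1 - δ)) := by
    rw [he, hτdef, ← mul_div_assoc]
    apply div_le_div_of_nonneg_right _ hd.le
    have : (T:ℝ) * (1 / (2 * T) * L) = L / 2 := by field_simp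
    rw [this]
    nlinarith
  have hX0 : 0 ≤ α + C' / T := by
    rw [hC']; positivity
  have heX : e ≤ α + C' / T := by
    have : e ≤ C' / T := by
      rw [le_div_iff₀ hTpos, hC']; linarith
    linarith
  have hsumc : ∀ c : ℝ, ∑ t ∈ Finset.Icc 1 T, c = T * c := by intro c; simp
  refine aux_final δ hδ hδ1 C Abar L mubar (α + C' / T) _ _ _ hC1 hA2 hL hmubar_pos hmu1 hX0
    ?_ ?_ (by positivity) (Real.sqrt_nonneg _)
  · rw [one_div, inv_mul_le_iff₀ hTpos, ← hsumc]
    exact Finset.sum_le_sum fun t _ => hr1 t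
  · rw [one_div, inv_mul_le_iff₀ hTpos]
    have h1 := Finset.sum_le_sum fun t (_ : t ∈ Finset.Icc 1 T) => hr2 t
    rw [Finset.sum_add_distrib, hsumc, ← Finset.sum_div] at h1
    refine h1.trans ?_
    have h2 : CΦ + T * (α + e) ≤ T * (α + C' / T) := by
      have : T * (α + C' / T) = T * α + C' := by field_simp
      rw [this, hC']; linarith
    have h3 : ∑ t ∈ Finset.Icc 1 T, D t ≤ T * (α + C' / T) / mubar := by
      rw [le_div_iff₀ hmubar_pos]; linarith
    have h4 := div_le_div_of_nonneg_right h3 hd.le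
    have h5 : α + C' / T ≤ (α + C' / T) / ((1 - δ) * mubar) := by
      rw [le_div_iff₀ (by positivity)]
      have : (1 - δ) * mubar ≤ 1 := by nlinarith
      nlinarith
    have h6 : T * (α + C' / T) / mubar / (1 - δ) = T * ((α + C' / T) / ((1 - δ) * mubar)) := by
      rw [div_div, mul_comm mubar, mul_div_assoc]
    have h7 : T * (2 * (α + C' / T) / ((1 - δ) * mubar))
      = T * ((α + C' / T) / ((1 - δ) * mubar)) + T * ((α + C' / T) / ((1 - δ) * mubar)) := by ring
    have h8 : T * e ≤ T * ((α + C' / T) / ((1 - δ) * mubar)) :=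
      mul_le_mul_of_nonneg_left (heX.trans h5) hTpos.le
    rw [h7]
    linarith
end

section
/- (Performance difference lemma for Markov games.) In a finite Markov game, for every player i, every profile π = (π_i,π_{-i}), every alternative policy π_i' of player i, and every probability distribution μ on S: V_i(μ,(π_i',π_{-i})) − V_i(μ,(π_i,π_{-i})) = (1/(1−δ))·∑_{s∈S} ∑_{a_i∈A_i} d_μ^{(π_i',π_{-i})}(s)·(π_i'(s,a_i) − π_i(s,a_i))·Q_i(s,a_i;(π_i,π_{-i})). -/
open Finset

theorem pdl_jd_sum {S I : Type*} [Fintype I] [DecidableEq I] {A : I → Type*}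
    [∀ i, Fintype (A i)] (π : ∀ j, S → A j → ℝ) (hπ : IsPolicy π) (s : S) :
    ∑ a : ∀ j, A j, jointDist π s a = 1 := by
  unfold jointDist
  rw [← Fintype.prod_sum (fun j b => π j s b)]
  exact Finset.prod_eq_one fun j _ => (hπ j s).2

theorem pdl_stoch {S I : Type*} [Fintype S] [DecidableEq S] [Fintype I] [DecidableEq I]
    {A : I → Type*} [∀ i, Fintype (A i)] (P : S → (∀ i, A i) → S → ℝ) (hP : IsKernel P)
    (π : ∀ j, S → A j → ℝ) (hπ : IsPolicy π) :
    Matrix.of (transMat P π) ∈ Matrix.rowStochastic ℝ S := by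
  rw [Matrix.mem_rowStochastic_iff_sum]
  constructor
  · intro s s'
    simp only [Matrix.of_apply, transMat]
    exact Finset.sum_nonneg fun a _ => mul_nonneg
      (Finset.prod_nonneg fun j _ => (hπ j s).1 _) ((hP s a).1 s')
  · intro s
    simp only [Matrix.of_apply, transMat]
    rw [Finset.sum_comm]
    simp_rw [← Finset.mul_sum]
    rw [← pdl_jd_sum π hπ s]
    refine Finset.sum_congr rfl fun a _ => ?_
    rw [(hP s a).2, mul_one]

theorem pdl_visit {S : Type*} [Fintype S] [DecidableEq S] (δ : ℝ) (hδ : 0 < δ) (hδ1 : δ < 1)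
    (M : Matrix S S ℝ) (hM : M ∈ Matrix.rowStochastic ℝ S) (μ : S → ℝ) (s : S) :
    ∑' k : ℕ, δ ^ k * ∑ s0, μ s0 * (M ^ k) s0 s
      = μ s + δ * ∑ t, (∑' k : ℕ, δ ^ k * ∑ s0, μ s0 * (M ^ k) s0 t) * M t s := by
  have hs : ∀ t, Summable fun k : ℕ => δ ^ k * ∑ s0, μ s0 * (M ^ k) s0 t := by
    intro t
    refine Summable.of_norm_bounded
      (g := fun k => δ ^ k * ∑ s0, |μ s0|)
      ((summable_geometric_of_lt_one hδ.le hδ1).mul_right _) fun k => ?_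
    rw [Real.norm_eq_abs, abs_mul, abs_of_nonneg (pow_nonneg hδ.le k)]
    refine mul_le_mul_of_nonneg_left ?_ (pow_nonneg hδ.le k)
    refine (Finset.abs_sum_le_sum_abs _ _).trans (Finset.sum_le_sum fun s0 _ => ?_)
    have hk := (Matrix.mem_rowStochastic_iff_sum).1 (pow_mem hM k)
    rw [abs_mul, abs_of_nonneg (hk.1 s0 t)]
    refine mul_le_of_le_one_right (abs_nonneg _) ?_
    rw [← hk.2 s0]
    exact Finset.single_le_sum (f := fun t => (M ^ k) s0 t) (fun j _ => hk.1 s0 j)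
      (Finset.mem_univ t)
  rw [(hs s).tsum_eq_zero_add]
  congr 1
  · simp [Matrix.one_apply]
  · simp_rw [← tsum_mul_right]
    rw [← Summable.tsum_finsetSum (fun t _ => (hs t).mul_right _), ← tsum_mul_left]
    refine tsum_congr fun k => ?_
    simp_rw [pow_succ M, Matrix.mul_apply, Finset.mul_sum, Finset.sum_mul, Finset.mul_sum]
    rw [Finset.sum_comm]
    refine Finset.sum_congr rfl fun t _ => Finset.sum_congr rfl fun s0 _ => ?_
    ring

theorem pdl_bell {S I : Type*} [Fintype S] [Fintype I] [DecidableEq I]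
    {A : I → Type*} [∀ i, Fintype (A i)] [∀ i, DecidableEq (A i)]
    (δ : ℝ) (P : S → (∀ i, A i) → S → ℝ) (u : S → (∀ i, A i) → ℝ)
    (i : I) (π : ∀ j, S → A j → ℝ) (p : S → A i → ℝ) (V : S → ℝ) (s : S) :
    ∑ ai, p s ai * Qfun δ P u π V i s ai
      = expPay u (Function.update π i p) s
        + δ * ∑ s', transMat P (Function.update π i p) s s' * V s' := by
  have h1 : ∀ a : ∀ j, A j, jointDist (Function.update π i p) s a
      = p s (a i) * ∏ j ∈ Finset.univ.erase i, π j s (a j) := by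
    intro a
    unfold jointDist
    rw [← Finset.mul_prod_erase _ _ (Finset.mem_univ i)]
    congr 1
    · simp
    · refine Finset.prod_congr rfl fun j hj => ?_
      rw [Function.update_of_ne (Finset.ne_of_mem_erase hj)]
  have h2 : ∑ s', transMat P (Function.update π i p) s s' * V s'
      = ∑ a, jointDist (Function.update π i p) s a * ∑ s', P s a s' * V s' := by
    simp_rw [transMat, Finset.sum_mul, Finset.mul_sum]
    rw [Finset.sum_comm]
    simp_rw [mul_assoc]
  rw [h2]
  unfold Qfun expPay
  simp_rw [Finset.mul_sum Finset.univ _ (p s _)]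
  rw [Finset.sum_comm, Finset.mul_sum Finset.univ _ δ, ← Finset.sum_add_distrib]
  refine Finset.sum_congr rfl fun a _ => ?_
  simp_rw [mul_ite, mul_zero]
  rw [Finset.sum_ite_eq, if_pos (Finset.mem_univ _), h1]
  ring

/-- **Performance difference lemma for Markov games.** -/
theorem performance_difference_lemma
    {S I : Type*} [Fintype S] [Nonempty S] [DecidableEq S]
    [Fintype I] [Nonempty I] [DecidableEq I]
    {A : I → Type*} [∀ i, Fintype (A i)] [∀ i, Nonempty (A i)] [∀ i, DecidableEq (A i)]
    (δ : ℝ) (hδ : 0 < δ) (hδ1 : δ < 1)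
    (P : S → (∀ i, A i) → S → ℝ) (hP : IsKernel P)
    (u : I → S → (∀ i, A i) → ℝ)
    (i : I) (π : ∀ j, S → A j → ℝ) (hπ : IsPolicy π)
    (πi' : S → A i → ℝ) (hπi' : ∀ s, IsProbVec (πi' s))
    (μ : S → ℝ) (hμ : IsProbVec μ)
    (V V' : S → ℝ)
    (hV : IsValueFun δ P (u i) π V)
    (hV' : IsValueFun δ P (u i) (Function.update π i πi') V') :
    (∑ s, μ s * V' s) - (∑ s, μ s * V s) =
      (1 / (1 - δ)) * ∑ s, ∑ ai,
        dvisit δ P (Function.update π i πi') μ s *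
          ((πi' s ai - π i s ai) * Qfun δ P (u i) π V i s ai) := by
  have hπ' : IsPolicy (Function.update π i πi') := by
    intro j s
    by_cases h : j = i
    · subst h; simpa using hπi' s
    · rw [Function.update_of_ne h]; exact hπ j s
  have hM := pdl_stoch P hP _ hπ'
  have hd := pdl_visit δ hδ hδ1 _ hM μ
  have hne : (1 - δ) ≠ 0 := by linarith
  have hb' := pdl_bell δ P (u i) i π πi' V
  have hb := pdl_bell δ P (u i) i π (π i) V
  rw [Function.update_eq_self] at hb
  unfold dvisit
  obtain ⟨D, hD'⟩ : ∃ D : S → ℝ, ∀ s, ∑' k : ℕ, δ ^ k *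
    ∑ s0, μ s0 * ((Matrix.of (transMat P (Function.update π i πi'))) ^ k) s0 s = D s :=
    ⟨_, fun _ => rfl⟩
  simp only [hD', Matrix.of_apply] at hd ⊢
  have hg : ∀ s, ∑ ai, (1 - δ) * D s * ((πi' s ai - π i s ai) * Qfun δ P (u i) π V i s ai)
      = (1 - δ) * (D s * ((V' s - V s) - δ * ∑ t, transMat P (Function.update π i πi') s t
          * (V' t - V t))) := by
    intro s
    rw [← Finset.mul_sum]
    simp_rw [sub_mul, mul_sub, Finset.sum_sub_distrib]
    rw [hb', hb, ← hV s]
    have := hV' s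
    linear_combination (-(1 - δ) * D s) * this
  simp_rw [hg]
  rw [← Finset.mul_sum, ← mul_assoc, one_div, inv_mul_cancel₀ hne, one_mul]
  simp_rw [mul_sub (D _) (_ - _) (δ * _)]
  simp only [Finset.sum_sub_distrib]
  have e : ∑ s, D s * (δ * ∑ t, transMat P (Function.update π i πi') s t * (V' t - V t))
      = ∑ t, (δ * ∑ s, D s * transMat P (Function.update π i πi') s t) * (V' t - V t) := by
    simp_rw [Finset.mul_sum, Finset.sum_mul]
    rw [Finset.sum_comm]
    refine Finset.sum_congr rfl fun t _ => Finset.sum_congr rfl fun s _ => ?_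
    ring
  rw [e, ← Finset.sum_sub_distrib, ← Finset.sum_sub_distrib]
  refine Finset.sum_congr rfl fun s _ => ?_
  linear_combination (-(V' s - V s)) * hd s
end
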